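/- arXiv:1905.01954 — 5 statements merged into one kernel-verified Lean document; each statement's English description precedes it below -/
import Mathlib

section
/- There is an absolute constant C > 0 such that the following holds. Let ℓ, h, k ∈ ℕ with 1 ≤ h < k and gcd(h,k) = 1, and let v_0, …, v_r be the denominators of the convergents of the continued fraction expansion of h/k. Then for every α ∈ (1/k)·ℤ one has |V₁(h/k, α)| ≤ ∑_{m=0}^{r−1} log(v_{m+1}/v_m)/v_m + C. -/
open Real Filter Finset

/-- The sawtooth function `((x))`: `0` if `x ∈ ℤ`, and `1/2 - {x}` otherwise. -/
noncomputable def sawtooth (x : ℝ) : ℝ := if Int.fract x = 0 then 0 else 1 / 2 - Int.fract x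

/-- Partial sums of the series defining `V₁(x, α) = 2 ∑_{m≥1} (cos(2πmα)/m)·((mx))`. -/
noncomputable def V1sum (x α : ℝ) (M : ℕ) : ℝ :=
  2 * ∑ m ∈ Finset.Icc 1 M, Real.cos (2 * π * m * α) / m * sawtooth (m * x)

/-!
Write `x = h / k` and `α = j / k`. The coefficients `cos (2πmα) ((mx))` are odd and `k`-periodic in
`m`, so the series for `V₁` is a finite cotangent sum. Expanding the cotangent by Eisenstein's
formula for the sawtooth and exchanging summations turns it into the cotangent sum belonging to the
series `∑ m, (((mx + α)) + ((mx - α))) / m`, whose value is therefore `V₁(x, α)`. In this dual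
series `α` is a mere translation. Its terms with `m ≥ k` contribute `O(1)`, because the numerators
sum to `0` over a period. For `v_j ≤ m < v_{j+1}` sum by parts: as `x` is within
`1 / (v_j v_{j+1})` of `u_j / v_j`, any `v_j` consecutive values `((mx + y))` have sum at most
`1/2 + O(v_j / v_{j+1})`, so this range contributes at most `log (v_{j+1} / v_j) / (2 v_j)` plus an
error whose sum over `j` is `O(1)`.
-/

/-! ### Sums over a period -/

section PeriodicSums

lemma sum_range_mul_reflect {k : ℕ} {F : ℤ → ℝ} (hF : Function.Periodic F k) (hodd : Function.Odd F)
    (g : ℕ → ℝ) : ∑ a ∈ range k, F a * g a = -∑ a ∈ range k, F a * g (k - a) := by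
  rcases k with _ | l
  · simp
  have hF0 : F 0 = 0 := hodd.map_zero
  rw [Finset.sum_range_succ', Finset.sum_range_succ', ← Finset.sum_range_reflect]
  simp only [Nat.cast_zero, hF0, zero_mul, add_zero, ← Finset.sum_neg_distrib, ← neg_mul]
  refine Finset.sum_congr rfl fun a ha ↦ ?_
  have hal : a < l := Finset.mem_range.1 ha
  have harg : ((l - 1 - a + 1 : ℕ) : ℤ) = -((a + 1 : ℕ) : ℤ) + (l + 1 : ℕ) := by lia
  rw [harg, hF, hodd]
  congr 2
  lia

lemma sum_range_mul_eq_sum_blocks {M : Type*} [AddCommMonoid M] (f : ℕ → M) (k n : ℕ) :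
    ∑ m ∈ range (n * k), f m = ∑ i ∈ range n, ∑ a ∈ range k, f (i * k + a) := by
  induction n with
  | zero => simp
  | succ n ih => rw [Finset.sum_range_succ, ← ih, Nat.succ_mul, Finset.sum_range_add]

variable {k : ℕ} [NeZero k]

lemma sum_range_comp_mul_add {M : Type*} [AddCommMonoid M] {F : ℤ → M}
    (hF : Function.Periodic F k) {h : ℤ} (hc : IsCoprime h k) (j : ℤ) :
    ∑ c ∈ range k, F (h * c + j) = ∑ c ∈ range k, F c := by
  have hk : (0 : ℤ) < k := mod_cast NeZero.pos k
  set σ : ℕ → ℕ := fun c ↦ ((h * c + j) % k).toNat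
  have hσ (c : ℕ) : (σ c : ℤ) = (h * c + j) % k := Int.toNat_of_nonneg (Int.emod_nonneg _ hk.ne')
  have maps : Set.MapsTo σ (range k) (range k) := fun c _ ↦ by
    have := Int.emod_lt_of_pos (h * c + j) hk
    rw [Finset.mem_coe, Finset.mem_range]
    lia
  have inj : Set.InjOn σ (range k) := fun c hc₁ d hd₁ hcd ↦ by
    rw [Finset.mem_coe, Finset.mem_range] at hc₁ hd₁
    have hmod : (h * c + j) % k = (h * d + j) % k := by rw [← hσ, ← hσ, hcd]
    have hdvd : (k : ℤ) ∣ c - d := hc.symm.dvd_of_dvd_mul_left <| by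
      have := Int.ModEq.dvd (Eq.symm hmod : (h * d + j) ≡ h * c + j [ZMOD k])
      rwa [add_sub_add_right_eq_sub, ← mul_sub] at this
    have := Int.eq_zero_of_abs_lt_dvd hdvd (abs_lt.2 ⟨by lia, by lia⟩)
    lia
  refine Finset.sum_nbij σ maps inj (Finset.surjOn_of_injOn_of_card_le σ maps inj le_rfl)
    fun c _ ↦ ?_
  rw [hσ, Int.emod_def, mul_comm (k : ℤ), ← smul_eq_mul (_ / _), hF.sub_zsmul_eq]

lemma sum_range_eq_zero_of_odd {F : ℤ → ℝ} (hF : Function.Periodic F k) (hodd : Function.Odd F) :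
    ∑ c ∈ range k, F c = 0 := by
  have hneg := sum_range_comp_mul_add hF (isCoprime_one_left.neg_left (x := 1)) 0
  simp only [neg_mul, one_mul, add_zero, hodd _, Finset.sum_neg_distrib] at hneg
  linarith

end PeriodicSums

/-! ### The sawtooth function -/

section Sawtooth

lemma sawtooth_intCast (n : ℤ) : sawtooth n = 0 := by
  simp [sawtooth]

lemma sawtooth_add_intCast (x : ℝ) (n : ℤ) : sawtooth (x + n) = sawtooth x := by
  simp [sawtooth]

lemma sawtooth_of_pos_of_lt_one {x : ℝ} (h0 : 0 < x) (h1 : x < 1) : sawtooth x = 1 / 2 - x := by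
  rw [sawtooth, Int.fract_eq_self.2 ⟨h0.le, h1⟩, if_neg h0.ne']

lemma odd_sawtooth : Function.Odd sawtooth := by
  intro x
  by_cases hx : Int.fract x = 0
  · simp [sawtooth, hx, Int.fract_neg_eq_zero]
  · rw [sawtooth, sawtooth, if_neg hx, if_neg (Int.fract_neg_eq_zero.not.2 hx), Int.fract_neg hx]
    ring

lemma abs_sawtooth_le (x : ℝ) : |sawtooth x| ≤ 1 / 2 := by
  unfold sawtooth
  split_ifs
  · norm_num
  · rw [abs_le]
    constructor <;> linarith [Int.fract_nonneg x, Int.fract_lt_one x]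

lemma monotone_sawtooth_add_id : Monotone fun x ↦ sawtooth x + x := by
  intro x y hxy
  have hx := Int.floor_add_fract x
  have hy := Int.floor_add_fract y
  have hx0 := Int.fract_nonneg x
  have hy0 := Int.fract_nonneg y
  have hx1 := Int.fract_lt_one x
  have hy1 := Int.fract_lt_one y
  simp only [sawtooth]
  rcases (Int.floor_le_floor hxy).eq_or_lt with hfloor | hfloor
  · rw [hfloor] at hx
    split_ifs with hx_int hy_int hy_int
    · linarith
    · linarith
    · exact absurd (le_antisymm (by linarith) hx0) hx_int
    · linarith
  · have hfloor' : (⌊x⌋ : ℝ) + 1 ≤ ⌊y⌋ := mod_cast hfloor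
    split_ifs <;> linarith

lemma periodic_sawtooth_add_div (x : ℝ) (k : ℕ) [NeZero k] :
    Function.Periodic (fun n : ℤ ↦ sawtooth (x + n / k)) k := by
  intro n
  have hk : (k : ℝ) ≠ 0 := NeZero.ne _
  have harg : x + ((n + k : ℤ) : ℝ) / k = x + n / k + (1 : ℤ) := by
    push_cast
    field_simp
    ring
  simp only [harg, sawtooth_add_intCast]

lemma sum_half_sub_add_div (q : ℕ) [NeZero q] (x : ℝ) :
    ∑ c ∈ range q, (1 / 2 - (x + c / q)) = 1 / 2 - q * x := by
  have hq : (q : ℝ) ≠ 0 := NeZero.ne _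
  have hgauss : (∑ c ∈ range q, (c : ℝ)) * 2 = q * (q - 1) := by
    have := congrArg (Nat.cast : ℕ → ℝ) (Finset.sum_range_id_mul_two q)
    rwa [Nat.cast_mul, Nat.cast_mul, Nat.cast_pred (NeZero.pos q), Nat.cast_sum] at this
  simp only [Finset.sum_sub_distrib, Finset.sum_add_distrib, ← Finset.sum_div, Finset.sum_const,
    Finset.card_range, nsmul_eq_mul]
  field_simp
  linarith

lemma sum_sawtooth_add_div_of_lt {q : ℕ} [NeZero q] {x : ℝ} (h0 : 0 ≤ x)
    (h1 : q * x < 1) : ∑ c ∈ range q, sawtooth (x + c / q) = sawtooth (q * x) := by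
  have hq : (0 : ℝ) < q := mod_cast NeZero.pos q
  have hlt (c : ℕ) (hc : c < q) : x + c / q < 1 := by
    have : (c : ℝ) + 1 ≤ q := mod_cast hc
    rw [← mul_lt_mul_iff_right₀ hq, mul_add, mul_div_cancel₀ _ hq.ne']
    linarith
  rcases h0.eq_or_lt with rfl | hx
  · have hsum := sum_half_sub_add_div q 0
    obtain ⟨n, rfl⟩ := Nat.exists_eq_succ_of_ne_zero (NeZero.ne q)
    rw [Finset.sum_range_succ'] at hsum ⊢
    rw [Finset.sum_congr rfl fun c hc ↦ sawtooth_of_pos_of_lt_one (by positivity)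
      (hlt (c + 1) (Nat.succ_lt_succ (Finset.mem_range.1 hc)))]
    have hzero : sawtooth 0 = 0 := mod_cast sawtooth_intCast 0
    simp only [Nat.cast_zero, zero_div, add_zero, mul_zero, hzero] at hsum ⊢
    linarith
  · rw [sawtooth_of_pos_of_lt_one (by positivity) h1, ← sum_half_sub_add_div]
    exact Finset.sum_congr rfl fun c hc ↦
      sawtooth_of_pos_of_lt_one (by positivity) (hlt c (Finset.mem_range.1 hc))

lemma sum_sawtooth_add_div {p : ℤ} {q : ℕ} [NeZero q] (hpq : IsCoprime p q) (x : ℝ) :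
    ∑ c ∈ range q, sawtooth (x + c * (p / q)) = sawtooth (q * x) := by
  have hq : (0 : ℝ) < q := mod_cast NeZero.pos q
  set z : ℝ := Int.fract (q * x) / q with hz
  have hqz : q * z = Int.fract (q * x) := mul_div_cancel₀ _ hq.ne'
  have hx : x = z + ⌊q * x⌋ / q := by
    rw [hz, ← add_div, Int.fract_add_floor, mul_div_cancel_left₀ _ hq.ne']
  calc ∑ c ∈ range q, sawtooth (x + c * (p / q))
      = ∑ c ∈ range q, sawtooth (z + (p * c + ⌊q * x⌋ : ℤ) / q) := by
        refine Finset.sum_congr rfl fun c _ ↦ congrArg sawtooth ?_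
        conv_lhs => rw [hx]
        push_cast
        ring
    _ = ∑ c ∈ range q, sawtooth (z + c / q) := by
        simpa only [Int.cast_natCast] using
          sum_range_comp_mul_add (periodic_sawtooth_add_div z q) hpq ⌊q * x⌋
    _ = sawtooth (q * z) := sum_sawtooth_add_div_of_lt (by positivity)
        (hqz ▸ Int.fract_lt_one (q * x))
    _ = sawtooth (q * x) := by
        rw [hqz, ← sawtooth_add_intCast _ ⌊q * x⌋, Int.fract_add_floor]

lemma abs_sum_sawtooth_le_of_approx {p : ℤ} {q : ℕ} [NeZero q] (hpq : IsCoprime p q) (x y : ℝ) :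
    |∑ c ∈ range q, sawtooth (y + c * x)| ≤ 1 / 2 + 2 * (q ^ 2 * |x - p / q|) := by
  -- Since `((t)) + t` is monotone, replacing `c * x` by `c * (p / q)` and shifting `y` by `± ε`
  -- bounds the sum on either side, and the sums at `p / q` collapse by the distribution relation.
  set ε : ℝ := q * |x - p / q|
  have happrox (c : ℕ) (hc : c ∈ range q) : |c * x - c * (p / q)| ≤ ε := by
    rw [← mul_sub, abs_mul, Nat.abs_cast]
    have : (c : ℝ) ≤ q := mod_cast (Finset.mem_range.1 hc).le
    exact mul_le_mul_of_nonneg_right this (abs_nonneg _)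
  have hrational (z : ℝ) : |∑ c ∈ range q, sawtooth (z + c * (p / q))| ≤ 1 / 2 :=
    sum_sawtooth_add_div hpq z ▸ abs_sawtooth_le _
  have upper : ∑ c ∈ range q, sawtooth (y + c * x) ≤
      ∑ c ∈ range q, (sawtooth (y + ε + c * (p / q)) + 2 * ε) :=
    Finset.sum_le_sum fun c hc ↦ by
      have hle := abs_le.1 (happrox c hc)
      have := monotone_sawtooth_add_id (show y + c * x ≤ y + ε + c * (p / q) by linarith)
      dsimp only at this
      linarith
  have lower : ∑ c ∈ range q, (sawtooth (y - ε + c * (p / q)) - 2 * ε) ≤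
      ∑ c ∈ range q, sawtooth (y + c * x) :=
    Finset.sum_le_sum fun c hc ↦ by
      have hle := abs_le.1 (happrox c hc)
      have := monotone_sawtooth_add_id (show y - ε + c * (p / q) ≤ y + c * x by linarith)
      dsimp only at this
      linarith
  rw [Finset.sum_add_distrib] at upper
  rw [Finset.sum_sub_distrib] at lower
  simp only [Finset.sum_const, Finset.card_range, nsmul_eq_mul] at upper lower
  have hε : (q : ℝ) ^ 2 * |x - p / q| = q * ε := by ring
  have hplus := abs_le.1 (hrational (y + ε))
  have hminus := abs_le.1 (hrational (y - ε))
  rw [abs_le, hε]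
  constructor <;> linarith

end Sawtooth

/-! ### Cotangent sums -/

section Cotangent

lemma two_mul_sin_mul_sum_sin (θ : ℝ) (n : ℕ) :
    2 * sin θ * ∑ c ∈ range n, sin (2 * θ * c) = cos θ - cos (2 * θ * n - θ) := by
  induction n with
  | zero => simp
  | succ n ih =>
    have harg : 2 * θ * (n + 1 : ℕ) - θ = 2 * θ * n + θ := by push_cast; ring
    rw [Finset.sum_range_succ, mul_add, ih, harg, cos_add, cos_sub]
    ring

lemma two_mul_sin_mul_sum_cos (θ : ℝ) (n : ℕ) :
    2 * sin θ * ∑ c ∈ range n, cos (2 * θ * c + θ) = sin (2 * θ * n) := by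
  induction n with
  | zero => simp
  | succ n ih =>
    have hsucc : 2 * θ * (n + 1 : ℕ) = (2 * θ * n + θ) + θ := by push_cast; ring
    have hpred : 2 * θ * n = (2 * θ * n + θ) - θ := by ring
    rw [Finset.sum_range_succ, mul_add, ih, hsucc, sin_add, congrArg sin hpred, sin_sub]
    ring

lemma two_mul_sin_mul_sum_mul_sin (θ : ℝ) (n : ℕ) :
    2 * sin θ * ∑ c ∈ range n, c * sin (2 * θ * c) =
      ∑ c ∈ range n, cos (2 * θ * c + θ) - n * cos (2 * θ * n - θ) := by
  induction n with
  | zero => simp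
  | succ n ih =>
    have harg : 2 * θ * (n + 1 : ℕ) - θ = 2 * θ * n + θ := by push_cast; ring
    rw [Finset.sum_range_succ, mul_add, ih, Finset.sum_range_succ, harg, cos_add, cos_sub]
    push_cast
    ring

-- If `k ∣ a`, both sides vanish, the right-hand one because `Real.cot` is `0` at its poles.
lemma two_mul_sum_sawtooth_mul_sin (k : ℕ) [NeZero k] (a : ℤ) :
    2 * ∑ c ∈ range k, sawtooth (c / k) * sin (2 * π * a * c / k) = cot (π * a / k) := by
  have hk : (0 : ℝ) < k := mod_cast NeZero.pos k
  set θ : ℝ := π * a / k with hθ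
  have hθk : 2 * θ * k = a * (2 * π) := by rw [hθ]; field_simp
  have hterm : ∀ c ∈ range k, sawtooth (c / k) * sin (2 * π * a * c / k) =
      1 / 2 * sin (2 * θ * c) - 1 / k * (c * sin (2 * θ * c)) := fun c hc ↦ by
    have harg : 2 * π * a * c / k = 2 * θ * c := by rw [hθ]; ring
    rw [harg]
    rcases Nat.eq_zero_or_pos c with rfl | hc0
    · simp
    rw [sawtooth_of_pos_of_lt_one (by positivity)
      ((div_lt_one hk).2 (mod_cast Finset.mem_range.1 hc))]
    ring
  rw [Finset.sum_congr rfl hterm, cot_eq_cos_div_sin]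
  by_cases hsin : sin θ = 0
  · obtain ⟨n, hn⟩ := sin_eq_zero_iff.1 hsin
    have hzero (c : ℕ) : sin (2 * θ * c) = 0 := by
      have := sin_int_mul_pi (2 * n * c)
      rw [← this, ← hn]
      push_cast
      ring_nf
    simp [hzero, hsin]
  · have hcos : cos (2 * θ * k - θ) = cos θ := by rw [hθk, cos_int_mul_two_pi_sub]
    have hsin_k : sin (2 * θ * k) = 0 := by
      rw [hθk, ← zero_add (_ * _), sin_add_int_mul_two_pi, sin_zero]
    have hsum_sin := two_mul_sin_mul_sum_sin θ k
    have hsum_mul_sin := two_mul_sin_mul_sum_mul_sin θ k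
    have hsum_cos : ∑ c ∈ range k, cos (2 * θ * c + θ) = 0 := by
      have := two_mul_sin_mul_sum_cos θ k
      rw [hsin_k] at this
      exact (mul_eq_zero.1 this).resolve_left (mul_ne_zero two_ne_zero hsin)
    rw [hcos, hsum_cos, zero_sub] at hsum_mul_sin
    rw [hcos, sub_self] at hsum_sin
    rw [Finset.sum_sub_distrib, ← Finset.mul_sum, ← Finset.mul_sum, eq_div_iff hsin]
    calc 2 * (1 / 2 * ∑ c ∈ range k, sin (2 * θ * c) -
          1 / k * ∑ c ∈ range k, c * sin (2 * θ * c)) * sin θ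
        = 1 / 2 * (2 * sin θ * ∑ c ∈ range k, sin (2 * θ * c)) -
          1 / k * (2 * sin θ * ∑ c ∈ range k, c * sin (2 * θ * c)) := by ring
      _ = cos θ := by rw [hsum_sin, hsum_mul_sin]; field_simp; ring

lemma sum_sawtooth_mul_cos (k : ℕ) [NeZero k] (a : ℤ) :
    ∑ c ∈ range k, sawtooth (c / k) * cos (2 * π * a * c / k) = 0 := by
  have hk : (k : ℝ) ≠ 0 := NeZero.ne _
  have hcos : Function.Periodic (fun n : ℤ ↦ cos (2 * π * a * n / k)) k := fun n ↦ by
    have harg : 2 * π * a * (n + k : ℤ) / k = 2 * π * a * n / k + a * (2 * π) := by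
      push_cast
      field_simp
    simp only [harg, cos_add_int_mul_two_pi]
  have hsaw := periodic_sawtooth_add_div 0 k
  simp only [zero_add] at hsaw
  have hodd : Function.Odd fun n : ℤ ↦ sawtooth (n / k) * cos (2 * π * a * n / k) := fun n ↦ by
    simp only [Int.cast_neg, mul_neg, neg_div, odd_sawtooth _, cos_neg, neg_mul]
  simpa only [Int.cast_natCast, Pi.mul_apply] using
    sum_range_eq_zero_of_odd (hsaw.mul hcos) hodd

lemma two_mul_sum_sawtooth_mul_sin_of_isCoprime {k : ℕ} [NeZero k] {h : ℤ} (hc : IsCoprime h k)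
    (a i : ℤ) :
    2 * ∑ c ∈ range k, sawtooth ((h * c + i) / k) * sin (2 * π * a * (h * c) / k) =
      cos (2 * π * a * i / k) * cot (π * a / k) := by
  have hk : (k : ℝ) ≠ 0 := NeZero.ne _
  set φ : ℝ := 2 * π * a * i / k with hφ
  have hsin : Function.Periodic (fun n : ℤ ↦ sin (2 * π * a * n / k - φ)) k := fun n ↦ by
    have harg : 2 * π * a * (n + k : ℤ) / k - φ = 2 * π * a * n / k - φ + a * (2 * π) := by
      push_cast
      field_simp
      ring
    simp only [harg, sin_add_int_mul_two_pi]
  have hsaw := periodic_sawtooth_add_div 0 k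
  simp only [zero_add] at hsaw
  calc 2 * ∑ c ∈ range k, sawtooth ((h * c + i) / k) * sin (2 * π * a * (h * c) / k)
      = 2 * ∑ c ∈ range k, sawtooth ((h * c + i : ℤ) / k) *
          sin (2 * π * a * (h * c + i : ℤ) / k - φ) := by
        refine congrArg _ (Finset.sum_congr rfl fun c _ ↦ ?_)
        push_cast
        congr 2
        rw [hφ]
        ring
    _ = 2 * ∑ c ∈ range k, sawtooth (c / k) * sin (2 * π * a * c / k - φ) := by
        simpa only [Int.cast_natCast, Pi.mul_apply] using
          congrArg (2 * ·) (sum_range_comp_mul_add (hsaw.mul hsin) hc i)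
    _ = cos φ * (2 * ∑ c ∈ range k, sawtooth (c / k) * sin (2 * π * a * c / k)) -
          2 * sin φ * ∑ c ∈ range k, sawtooth (c / k) * cos (2 * π * a * c / k) := by
        simp only [Finset.mul_sum, ← Finset.sum_sub_distrib, sin_sub]
        exact Finset.sum_congr rfl fun c _ ↦ by ring
    _ = cos φ * cot (π * a / k) := by
        rw [two_mul_sum_sawtooth_mul_sin, sum_sawtooth_mul_cos, mul_zero, sub_zero]

-- Expanding one cotangent by the finite Fourier expansion of the sawtooth and exchanging the two
-- summations trades the shift `i` for the frequency `i`.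
lemma sum_sawtooth_add_mul_cot {k : ℕ} [NeZero k] {h : ℤ} (hc : IsCoprime h k) (i : ℤ) :
    ∑ b ∈ range k, sawtooth ((h * b + i) / k) * cot (π * b / k) =
      ∑ a ∈ range k, cos (2 * π * a * i / k) * sawtooth (h * a / k) * cot (π * a / k) := by
  have hcot (b : ℕ) : cot (π * b / k) =
      2 * ∑ a ∈ range k, sawtooth (h * a / k) * sin (2 * π * b * (h * a) / k) := by
    simpa using (two_mul_sum_sawtooth_mul_sin_of_isCoprime hc b 0).symm
  calc ∑ b ∈ range k, sawtooth ((h * b + i) / k) * cot (π * b / k)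
      = ∑ b ∈ range k, ∑ a ∈ range k, sawtooth ((h * b + i) / k) *
          (2 * (sawtooth (h * a / k) * sin (2 * π * b * (h * a) / k))) := by
        simp only [hcot, Finset.mul_sum]
    _ = ∑ a ∈ range k, sawtooth (h * a / k) *
          (2 * ∑ b ∈ range k, sawtooth ((h * b + i) / k) * sin (2 * π * a * (h * b) / k)) := by
        rw [Finset.sum_comm]
        simp only [Finset.mul_sum]
        refine Finset.sum_congr rfl fun a _ ↦ Finset.sum_congr rfl fun b _ ↦ ?_
        rw [show 2 * π * b * (h * a) / k = 2 * π * a * (h * b) / k by ring]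
        ring
    _ = ∑ a ∈ range k, cos (2 * π * a * i / k) * sawtooth (h * a / k) * cot (π * a / k) := by
        refine Finset.sum_congr rfl fun a _ ↦ ?_
        have := two_mul_sum_sawtooth_mul_sin_of_isCoprime hc a i
        simp only [Int.cast_natCast] at this
        rw [this]
        ring

lemma tendsto_sum_one_div_add_sub_one_div_sub {x : ℝ} (hx : x ∉ Set.range ((↑) : ℤ → ℝ)) :
    Tendsto (fun n : ℕ ↦ ∑ i ∈ range n, (1 / (i + x) - 1 / (i + 1 - x))) atTop
      (nhds (π * cot (π * x))) := by
  have hxℂ : (x : ℂ) ∈ Complex.integerComplement := fun ⟨n, hn⟩ ↦ hx ⟨n, mod_cast hn⟩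
  have euler : Tendsto (fun n : ℕ ↦ ∑ j ∈ range n, (1 / (x - (j + 1)) + 1 / (x + (j + 1)))) atTop
      (nhds (π * cot (π * x) - 1 / x)) := by
    have := tendsto_logDeriv_euler_cot_sub hxℂ
    simp only [cotTerm] at this
    exact tendsto_ofReal_iff.1 (mod_cast this)
  have boundary : Tendsto (fun n : ℕ ↦ 1 / x - 1 / (n + x)) atTop (nhds (1 / x - 0)) := by
    simp only [one_div]
    exact tendsto_const_nhds.sub
      (tendsto_atTop_add_const_right _ _ tendsto_natCast_atTop_atTop).inv_tendsto_atTop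
  have hsum := euler.add boundary
  rw [show π * cot (π * x) - 1 / x + (1 / x - 0) = π * cot (π * x) by ring] at hsum
  refine hsum.congr fun n ↦ ?_
  induction n with
  | zero => simp
  | succ n ih =>
    rw [Finset.sum_range_succ, Finset.sum_range_succ, ← ih,
      show x - ((n : ℝ) + 1) = -(n + 1 - x) by ring, one_div_neg_eq_neg_one_div]
    push_cast
    ring

lemma sum_odd_periodic_div {k : ℕ} [NeZero k] {F : ℤ → ℝ} (hF : Function.Periodic F k)
    (hodd : Function.Odd F) (i : ℕ) :
    ∑ a ∈ range k, F (i * k + a : ℕ) / (i * k + a : ℕ) =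
      ∑ a ∈ range k, F a / (2 * k) * (1 / (i + (a : ℝ) / k) - 1 / (i + 1 - (a : ℝ) / k)) := by
  have hk : (k : ℝ) ≠ 0 := NeZero.ne _
  have hperiod (a : ℕ) : F (i * k + a : ℕ) = F a := by
    have := hF.nat_mul i a
    rw [← this]
    push_cast
    ring_nf
  set g : ℕ → ℝ := fun a ↦ 1 / (i + (a : ℝ) / k)
  have hg {a : ℕ} (ha : a ∈ range k) : g (k - a) = 1 / (i + 1 - (a : ℝ) / k) := by
    simp only [g, Nat.cast_sub (Finset.mem_range.1 ha).le, sub_div, div_self hk, add_sub_assoc]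
  calc ∑ a ∈ range k, F (i * k + a : ℕ) / (i * k + a : ℕ)
      = (∑ a ∈ range k, F a * g a) / k := by
        rw [Finset.sum_div]
        refine Finset.sum_congr rfl fun a _ ↦ ?_
        rw [hperiod, mul_one_div, div_div]
        push_cast
        field_simp
    _ = (∑ a ∈ range k, F a * g a - ∑ a ∈ range k, F a * g (k - a)) / (2 * k) := by
        have := sum_range_mul_reflect hF hodd g
        rw [div_eq_div_iff hk (by positivity)]
        linear_combination (k : ℝ) * this
    _ = ∑ a ∈ range k, F a / (2 * k) * (1 / (i + (a : ℝ) / k) - 1 / (i + 1 - (a : ℝ) / k)) := by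
        rw [← Finset.sum_sub_distrib, Finset.sum_div]
        refine Finset.sum_congr rfl fun a ha ↦ ?_
        rw [hg ha]
        ring

lemma tendsto_sum_odd_periodic_div {k : ℕ} [NeZero k] {F : ℤ → ℝ} (hF : Function.Periodic F k)
    (hodd : Function.Odd F) :
    Tendsto (fun n : ℕ ↦ ∑ m ∈ range (n * k), F m / m) atTop
      (nhds (π / (2 * k) * ∑ a ∈ range k, F a * cot (π * a / k))) := by
  have hk : (0 : ℝ) < k := mod_cast NeZero.pos k
  simp only [sum_range_mul_eq_sum_blocks, sum_odd_periodic_div hF hodd]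
  simp only [Finset.sum_comm (t := range k), ← Finset.mul_sum]
  rw [Finset.mul_sum]
  refine tendsto_finsetSum _ fun a ha ↦ ?_
  rcases Nat.eq_zero_or_pos a with rfl | ha0
  · simp [hodd.map_zero]
  have hak : (a : ℝ) / k ∉ Set.range ((↑) : ℤ → ℝ) := by
    rintro ⟨n, hn⟩
    have hpos : (0 : ℝ) < n := hn ▸ by positivity
    have hlt : (n : ℝ) < 1 := hn ▸ (div_lt_one hk).2 (mod_cast Finset.mem_range.1 ha)
    norm_cast at hpos hlt
    lia
  have hlim := (tendsto_sum_one_div_add_sub_one_div_sub hak).const_mul (F a / (2 * k))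
  rwa [show F a / (2 * k) * (π * cot (π * (a / k))) = π / (2 * k) * (F a * cot (π * a / k)) by
    rw [mul_div_assoc π (a : ℝ)]; ring] at hlim

end Cotangent

/-! ### Partial summation -/

section PartialSummation

variable {V : Type*} [SeminormedAddCommGroup V]

lemma norm_sum_range_le_of_blocks {q : ℕ} [NeZero q] {s : ℕ → V} {κ E : ℝ}
    (hblock : ∀ N, ‖∑ c ∈ range q, s (N + c)‖ ≤ κ)
    (hshort : ∀ N, ∀ t < q, ‖∑ c ∈ range t, s (N + c)‖ ≤ E) (N t : ℕ) :
    ‖∑ c ∈ range t, s (N + c)‖ ≤ E + κ / q * t := by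
  have hq : (0 : ℝ) < q := mod_cast NeZero.pos q
  have hκ : 0 ≤ κ := (norm_nonneg _).trans (hblock 0)
  induction t using Nat.strong_induction_on generalizing N with
  | h t ih =>
    rcases lt_or_ge t q with htq | hqt
    · exact (hshort N t htq).trans (le_add_of_nonneg_right (by positivity))
    · obtain ⟨t, rfl⟩ := Nat.exists_eq_add_of_le hqt
      have hrest := ih t (by have := NeZero.pos q; lia) (N + q)
      simp only [Finset.sum_range_add, ← add_assoc]
      calc ‖∑ c ∈ range q, s (N + c) + ∑ c ∈ range t, s (N + q + c)‖
          ≤ κ + (E + κ / q * t) := norm_add_le_of_le (hblock N) hrest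
        _ = E + κ / q * (q + t : ℕ) := by push_cast; field_simp; ring

lemma norm_sum_smul_le_of_antitone [NormedSpace ℝ V] {w : ℕ → ℝ} (hw : Antitone w)
    (hw0 : ∀ i, 0 ≤ w i) {a : ℕ → V} {E κ : ℝ}
    (ha : ∀ t : ℕ, ‖∑ i ∈ range t, a i‖ ≤ E + κ * t) (T : ℕ) :
    ‖∑ i ∈ range T, w i • a i‖ ≤ E * w 0 + κ * ∑ i ∈ range T, w i := by
  have abel (t : ℕ) : ‖∑ i ∈ range t, w i • a i - w t • ∑ i ∈ range t, a i‖ ≤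
      E * w 0 + κ * ∑ i ∈ range t, w i - w t * (E + κ * t) := by
    induction t with
    | zero => simp [mul_comm]
    | succ t ih =>
      have hstep : ‖(w t - w (t + 1)) • ∑ i ∈ range (t + 1), a i‖ ≤
          (w t - w (t + 1)) * (E + κ * (t + 1 : ℕ)) := by
        rw [norm_smul, Real.norm_of_nonneg (sub_nonneg.2 (hw t.le_succ))]
        exact mul_le_mul_of_nonneg_left (ha _) (sub_nonneg.2 (hw t.le_succ))
      have hsplit : ∑ i ∈ range (t + 1), w i • a i - w (t + 1) • ∑ i ∈ range (t + 1), a i =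
          (∑ i ∈ range t, w i • a i - w t • ∑ i ∈ range t, a i) +
            (w t - w (t + 1)) • ∑ i ∈ range (t + 1), a i := by
        simp only [Finset.sum_range_succ]
        module
      rw [hsplit]
      refine (norm_add_le_of_le ih hstep).trans_eq ?_
      rw [Finset.sum_range_succ]
      push_cast
      ring
  have hlast : ‖w T • ∑ i ∈ range T, a i‖ ≤ w T * (E + κ * T) := by
    rw [norm_smul, Real.norm_of_nonneg (hw0 T)]
    exact mul_le_mul_of_nonneg_left (ha T) (hw0 T)
  have := norm_add_le_of_le (abel T) hlast
  rwa [sub_add_cancel, sub_add_cancel] at this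

lemma sum_one_div_add_le_log {q : ℝ} (hq : 0 < q) (T : ℕ) :
    ∑ i ∈ range T, 1 / (q + i) ≤ 1 / q + log ((q + T) / q) := by
  suffices ∑ i ∈ range T, 1 / (q + i) ≤ 1 / q - 1 / (q + T) + log ((q + T) / q) by
    have : 0 ≤ 1 / (q + T) := by positivity
    linarith
  induction T with
  | zero => simp [hq.ne']
  | succ T ih =>
    have hlog : 1 / (q + (T + 1 : ℕ)) ≤ log ((q + (T + 1 : ℕ)) / (q + T)) := by
      refine le_of_eq_of_le ?_ (one_sub_inv_le_log_of_pos (by positivity))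
      push_cast
      field_simp
      ring
    have hsplit : log ((q + (T + 1 : ℕ)) / q) =
        log ((q + (T + 1 : ℕ)) / (q + T)) + log ((q + T) / q) := by
      rw [← log_mul (by positivity) (by positivity), div_mul_div_cancel₀ (by positivity)]
    rw [Finset.sum_range_succ]
    linarith

lemma norm_sum_one_div_add_smul_le [NormedSpace ℝ V] {a : ℕ → V} {E κ : ℝ} (hκ : 0 ≤ κ)
    (ha : ∀ t : ℕ, ‖∑ i ∈ range t, a i‖ ≤ E + κ * t) {q : ℝ} (hq : 0 < q) (T : ℕ) :
    ‖∑ i ∈ range T, (1 / (q + i)) • a i‖ ≤ E / q + κ * (1 / q + log ((q + T) / q)) := by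
  have hanti : Antitone fun i : ℕ ↦ 1 / (q + i) := fun i j hij ↦
    one_div_le_one_div_of_le (by positivity) (by gcongr)
  refine (norm_sum_smul_le_of_antitone hanti (fun i ↦ by positivity) ha T).trans ?_
  rw [Nat.cast_zero, add_zero, mul_one_div]
  gcongr
  exact sum_one_div_add_le_log hq T

end PartialSummation

/-! ### Convergents -/

lemma sum_range_le_of_two_mul_le {a : ℕ → ℝ} (ha : ∀ j, 0 ≤ a j) (n : ℕ)
    (hhalf : ∀ j, j + 2 < n → 2 * a (j + 2) ≤ a j) :
    ∑ j ∈ range n, a j ≤ 2 * (a 0 + a 1) := by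
  have strong (m : ℕ) (hm : m + 2 ≤ n) :
      ∑ j ∈ range (m + 2), a j + (a m + a (m + 1)) ≤ 2 * (a 0 + a 1) := by
    induction m with
    | zero => simp only [zero_add, Finset.sum_range_succ, Finset.sum_range_zero]; linarith
    | succ m ih =>
      rw [Finset.sum_range_succ]
      linarith [ih (by lia), hhalf m (by lia)]
  rcases n with _ | _ | m
  · simpa using add_nonneg (ha 0) (ha 1)
  · simp only [zero_add, Finset.sum_range_one]
    linarith [ha 0, ha 1]
  · linarith [strong m le_rfl, ha m, ha (m + 1)]

/-- `b 1, …, b r` are positive integers and `u m / v m`, for `m ≤ r`, are the convergents of the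
continued fraction `[0; b 1, …, b r]`. The values of `b`, `u`, `v` at larger indices are
unconstrained. -/
structure IsConvergents (r : ℕ) (b u v : ℕ → ℕ) : Prop where
  b_pos : ∀ m, 1 ≤ m → m ≤ r → 1 ≤ b m
  u_zero : u 0 = 0
  v_zero : v 0 = 1
  u_one : 1 ≤ r → u 1 = 1
  v_one : 1 ≤ r → v 1 = b 1
  u_add_two : ∀ m, m + 2 ≤ r → u (m + 2) = b (m + 2) * u (m + 1) + u m
  v_add_two : ∀ m, m + 2 ≤ r → v (m + 2) = b (m + 2) * v (m + 1) + v m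

namespace IsConvergents

variable {r : ℕ} {b u v : ℕ → ℕ} {m : ℕ}

lemma v_pos (H : IsConvergents r b u v) (hm : m ≤ r) : 0 < v m := by
  induction m using Nat.twoStepInduction with
  | zero => simp [H.v_zero]
  | one => exact H.v_one hm ▸ H.b_pos 1 le_rfl hm
  | more m ih _ => exact H.v_add_two m hm ▸ Nat.add_pos_right _ (ih (by lia))

lemma v_le_v_succ (H : IsConvergents r b u v) (hm : m < r) : v m ≤ v (m + 1) := by
  rcases m with _ | m
  · rw [H.v_zero]
    exact H.v_pos hm
  · rw [H.v_add_two m hm]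
    exact le_add_right (Nat.le_mul_of_pos_left _ (H.b_pos _ (by lia) hm))

lemma two_mul_v_le (H : IsConvergents r b u v) (hm : m + 2 ≤ r) : 2 * v m ≤ v (m + 2) := by
  have hmul := Nat.le_mul_of_pos_left (v (m + 1)) (H.b_pos (m + 2) (by lia) hm)
  have hle := H.v_le_v_succ (m := m) (by lia)
  rw [H.v_add_two m hm]
  lia

lemma det_eq_neg_one_pow (H : IsConvergents r b u v) (hm : m < r) :
    (u (m + 1) * v m - u m * v (m + 1) : ℤ) = (-1) ^ m := by
  induction m with
  | zero => simp [H.u_zero, H.v_zero, H.u_one hm]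
  | succ m ih =>
    rw [H.u_add_two m hm, H.v_add_two m hm, pow_succ, ← ih (by lia)]
    push_cast
    ring

lemma isCoprime (H : IsConvergents r b u v) (hm : m < r) : IsCoprime (u m : ℤ) (v m) := by
  refine ⟨-(-1) ^ m * v (m + 1), (-1) ^ m * u (m + 1), ?_⟩
  have hsq : ((-1) ^ m * (-1) ^ m : ℤ) = 1 := by rw [← mul_pow]; simp
  linear_combination (-1) ^ m * H.det_eq_neg_one_pow hm + hsq

lemma exists_eq_mul_add_mul (H : IsConvergents r b u v) (hm : m < r) :
    ∃ A B : ℕ, u r = A * u (m + 1) + B * u m ∧ v r = A * v (m + 1) + B * v m := by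
  obtain ⟨d, hd⟩ := Nat.exists_eq_add_of_lt hm
  induction d generalizing m with
  | zero => exact ⟨1, 0, by simp [hd]⟩
  | succ d ih =>
    obtain ⟨A, B, hu, hv⟩ := ih (m := m + 1) (by lia) (by lia)
    refine ⟨A * b (m + 2) + B, A, ?_, ?_⟩
    · rw [hu, H.u_add_two m (by lia)]
      ring
    · rw [hv, H.v_add_two m (by lia)]
      ring

lemma abs_div_sub_div_le (H : IsConvergents r b u v) (hm : m < r) :
    |(u r / v r : ℝ) - u m / v m| ≤ 1 / (v m * v (m + 1)) := by
  obtain ⟨A, B, hu, hv⟩ := H.exists_eq_mul_add_mul hm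
  have hv_m : (0 : ℝ) < v m := mod_cast H.v_pos hm.le
  have hv_succ : (0 : ℝ) < v (m + 1) := mod_cast H.v_pos hm
  have hv_r : (0 : ℝ) < v r := mod_cast H.v_pos le_rfl
  have hdet : (u (m + 1) * v m - u m * v (m + 1) : ℝ) = (-1) ^ m := mod_cast H.det_eq_neg_one_pow hm
  have hdiff : (u r / v r : ℝ) - u m / v m = (-1) ^ m * (A / (v m * v r)) := by
    rw [div_sub_div _ _ hv_r.ne' hv_m.ne', ← hdet, mul_comm (v m : ℝ), mul_div_assoc']
    congr 1
    rw [hu, hv]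
    push_cast
    ring
  have hA : (A * v (m + 1) : ℝ) ≤ v r := mod_cast hv ▸ Nat.le_add_right _ _
  rw [hdiff, abs_mul, abs_pow, abs_neg, abs_one, one_pow, one_mul, abs_of_nonneg (by positivity),
    div_le_div_iff₀ (by positivity) (by positivity)]
  calc (A * (v m * v (m + 1)) : ℝ) = v m * (A * v (m + 1)) := by ring
    _ ≤ v m * v r := by gcongr
    _ = 1 * (v m * v r) := (one_mul _).symm

lemma sum_Ico_one_div_v_le (H : IsConvergents r b u v) {i : ℕ} (hi : i < r) :
    ∑ j ∈ Ico i r, (1 / v j : ℝ) ≤ 4 / v i := by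
  have hv_i : (0 : ℝ) < v i := mod_cast H.v_pos hi.le
  have hle : (1 / v (i + 1) : ℝ) ≤ 1 / v i :=
    one_div_le_one_div_of_le hv_i (mod_cast H.v_le_v_succ hi)
  have hhalf (j : ℕ) (hj : j + 2 < r - i) : 2 * (1 / v (i + (j + 2)) : ℝ) ≤ 1 / v (i + j) := by
    have hpos : (0 : ℝ) < v (i + j) := mod_cast H.v_pos (m := i + j) (by lia)
    have htwo : (2 * v (i + j) : ℝ) ≤ v (i + (j + 2)) :=
      mod_cast H.two_mul_v_le (m := i + j) (by lia)
    rw [mul_one_div, div_le_div_iff₀ (by linarith) hpos]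
    linarith
  have := sum_range_le_of_two_mul_le (a := fun j ↦ (1 / v (i + j) : ℝ))
    (fun j ↦ by positivity) (r - i) hhalf
  rw [Finset.sum_Ico_eq_sum_range]
  refine this.trans ?_
  calc (2 * (1 / v i + 1 / v (i + 1)) : ℝ) ≤ 2 * (1 / v i + 1 / v i) := by gcongr
    _ = 4 / v i := by ring

lemma sum_one_div_v_le (H : IsConvergents r b u v) : ∑ j ∈ range r, (1 / v j : ℝ) ≤ 4 := by
  rcases Nat.eq_zero_or_pos r with rfl | hr
  · simp
  · simpa [H.v_zero] using H.sum_Ico_one_div_v_le hr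

lemma sum_sum_div_div_le (H : IsConvergents r b u v) :
    ∑ j ∈ range r, (∑ i ∈ range j, (v (i + 1) / v i : ℝ)) / v j ≤ 16 := by
  calc ∑ j ∈ range r, (∑ i ∈ range j, (v (i + 1) / v i : ℝ)) / v j
      = ∑ i ∈ range r, (v (i + 1) / v i : ℝ) * ∑ j ∈ Ico (i + 1) r, (1 / v j : ℝ) := by
        simp only [Finset.sum_div, Finset.mul_sum, mul_one_div, Finset.range_eq_Ico]
        exact (Finset.sum_Ico_Ico_comm' 0 r _).symm
    _ ≤ ∑ i ∈ range r, 4 * (1 / v i : ℝ) := Finset.sum_le_sum fun i hi ↦ by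
        have hir : i < r := Finset.mem_range.1 hi
        have hv_succ : (0 : ℝ) < v (i + 1) := mod_cast H.v_pos hir
        rcases (Nat.succ_le_of_lt hir).eq_or_lt with hlast | hlt
        · simp [← hlast]
        · calc (v (i + 1) / v i : ℝ) * ∑ j ∈ Ico (i + 1) r, (1 / v j : ℝ)
              ≤ v (i + 1) / v i * (4 / v (i + 1)) := by
                gcongr
                exact H.sum_Ico_one_div_v_le hlt
            _ = 4 * (1 / v i) := by field_simp
    _ ≤ 16 := by
        rw [← Finset.mul_sum]
        linarith [H.sum_one_div_v_le]

/-! ### Sawtooth sums along a continued fraction -/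

lemma abs_sum_sawtooth_v_le (H : IsConvergents r b u v) (hm : m < r) (y : ℝ) :
    |∑ c ∈ range (v m), sawtooth (y + c * (u r / v r))| ≤ 1 / 2 + 2 * (v m / v (m + 1)) := by
  have hv_m : (0 : ℝ) < v m := mod_cast H.v_pos hm.le
  have : NeZero (v m) := ⟨(H.v_pos hm.le).ne'⟩
  refine (abs_sum_sawtooth_le_of_approx (H.isCoprime hm) _ y).trans ?_
  gcongr
  calc (v m : ℝ) ^ 2 * |(u r / v r : ℝ) - (u m : ℤ) / v m|
      ≤ (v m : ℝ) ^ 2 * (1 / (v m * v (m + 1))) := by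
        gcongr
        exact H.abs_div_sub_div_le hm
    _ = (v m / v (m + 1) : ℝ) := by field_simp

lemma abs_sum_sawtooth_le (H : IsConvergents r b u v) (hm : m < r) {E : ℝ}
    (hshort : ∀ y, ∀ t < v m, |∑ c ∈ range t, sawtooth (y + c * (u r / v r))| ≤ E)
    (y : ℝ) (t : ℕ) : |∑ c ∈ range t, sawtooth (y + c * (u r / v r))| ≤
      E + (1 / 2 + 2 * (v m / v (m + 1))) / v m * t := by
  have : NeZero (v m) := ⟨(H.v_pos hm.le).ne'⟩
  have hshift (N c : ℕ) : sawtooth (y + (N + c : ℕ) * (u r / v r)) =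
      sawtooth (y + N * (u r / v r) + c * (u r / v r)) := by
    push_cast
    ring_nf
  have := norm_sum_range_le_of_blocks (s := fun c ↦ sawtooth (y + c * (u r / v r)))
    (fun N ↦ by
      simpa only [hshift, Real.norm_eq_abs] using H.abs_sum_sawtooth_v_le hm (y + N * (u r / v r)))
    (fun N ↦ by simpa only [hshift, Real.norm_eq_abs] using hshort (y + N * (u r / v r))) 0 t
  simpa only [zero_add, Real.norm_eq_abs] using this

lemma abs_sum_sawtooth_le_of_lt (H : IsConvergents r b u v) (hm : m < r) (y : ℝ) (t : ℕ)
    (ht : t < v m) :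
    |∑ c ∈ range t, sawtooth (y + c * (u r / v r))| ≤
      5 / 2 * ∑ i ∈ range m, (v (i + 1) / v i : ℝ) := by
  induction m generalizing y t with
  | zero =>
    obtain rfl : t = 0 := by have := H.v_zero; lia
    simp
  | succ m ih =>
    have hmr : m < r := by lia
    have hv_m : (0 : ℝ) < v m := mod_cast H.v_pos hmr.le
    have hratio : (v m / v (m + 1) : ℝ) ≤ 1 :=
      div_le_one_of_le₀ (mod_cast H.v_le_v_succ hmr) (Nat.cast_nonneg _)
    have hblocks : (1 / 2 + 2 * (v m / v (m + 1))) / v m * t ≤ 5 / 2 * (v (m + 1) / v m : ℝ) :=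
      calc ((1 / 2 + 2 * (v m / v (m + 1))) / v m * t : ℝ)
          ≤ (1 / 2 + 2 * 1) / v m * v (m + 1) := by gcongr
        _ = 5 / 2 * (v (m + 1) / v m : ℝ) := by ring
    rw [Finset.sum_range_succ, mul_add]
    linarith [H.abs_sum_sawtooth_le hmr (ih hmr) y t]

lemma abs_sum_Ico_sawtooth_div_le (H : IsConvergents r b u v) (hm : m < r) (y : ℝ) :
    |∑ n ∈ Ico (v m) (v (m + 1)), sawtooth (y + n * (u r / v r)) / n| ≤
      1 / 2 * (log (v (m + 1) / v m) / v m) + 9 / 2 * (1 / v m) +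
        5 / 2 * ((∑ i ∈ range m, (v (i + 1) / v i : ℝ)) / v m) := by
  have hv_m : (0 : ℝ) < v m := mod_cast H.v_pos hm.le
  have hv_one : (1 : ℝ) ≤ v m := mod_cast H.v_pos hm.le
  have hv_succ : (0 : ℝ) < v (m + 1) := mod_cast H.v_pos hm
  have hle := H.v_le_v_succ hm
  have hratio : (v m / v (m + 1) : ℝ) ≤ 1 := div_le_one_of_le₀ (mod_cast hle) (Nat.cast_nonneg _)
  set L : ℝ := log (v (m + 1) / v m)
  have hlog : v m / v (m + 1) * L ≤ 1 := by
    calc v m / v (m + 1) * L ≤ v m / v (m + 1) * (v (m + 1) / v m) := by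
          gcongr
          exact log_le_self (by positivity)
      _ = 1 := by field_simp
  have hsum (t : ℕ) : ‖∑ i ∈ range t, sawtooth (y + v m * (u r / v r) + i * (u r / v r))‖ ≤ _ :=
    H.abs_sum_sawtooth_le hm (H.abs_sum_sawtooth_le_of_lt hm) _ t
  have habel := norm_sum_one_div_add_smul_le (by positivity) hsum hv_m (v (m + 1) - v m)
  rw [Nat.cast_sub hle, add_sub_cancel] at habel
  rw [Finset.sum_Ico_eq_sum_range]
  calc |∑ i ∈ range (v (m + 1) - v m), sawtooth (y + (v m + i : ℕ) * (u r / v r)) / (v m + i : ℕ)|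
      = ‖∑ i ∈ range (v (m + 1) - v m), (1 / (v m + i) : ℝ) •
          sawtooth (y + v m * (u r / v r) + i * (u r / v r))‖ := by
        refine congrArg _ (Finset.sum_congr rfl fun i _ ↦ ?_)
        rw [smul_eq_mul, one_div_mul_eq_div]
        push_cast
        ring_nf
    _ ≤ _ := habel
    _ = 1 / 2 * (L / v m) + (1 / 2 + 2 * (v m / v (m + 1))) * (1 / v m) * (1 / v m) +
          2 * (v m / v (m + 1) * L) * (1 / v m) +
          5 / 2 * ((∑ i ∈ range m, (v (i + 1) / v i : ℝ)) / v m) := by ring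
    _ ≤ 1 / 2 * (L / v m) + (1 / 2 + 2 * 1) * (1 / v m) * 1 + 2 * 1 * (1 / v m) +
          5 / 2 * ((∑ i ∈ range m, (v (i + 1) / v i : ℝ)) / v m) := by
        gcongr
        exact (div_le_one₀ hv_m).2 hv_one
    _ = _ := by ring

lemma abs_sum_range_sawtooth_div_le (H : IsConvergents r b u v) (y : ℝ) :
    |∑ n ∈ range (v r), sawtooth (y + n * (u r / v r)) / n| ≤
      1 / 2 * ∑ m ∈ range r, log (v (m + 1) / v m) / v m + 58 := by
  have hlevels (m : ℕ) (hm : m ≤ r) : ∑ n ∈ range (v m), sawtooth (y + n * (u r / v r)) / n =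
      ∑ j ∈ range m, ∑ n ∈ Ico (v j) (v (j + 1)), sawtooth (y + n * (u r / v r)) / n := by
    induction m with
    | zero => simp [H.v_zero]
    | succ m ih =>
      rw [Finset.sum_range_succ, ← ih (by lia), Finset.sum_range_add_sum_Ico _ (H.v_le_v_succ hm)]
  rw [hlevels r le_rfl]
  refine (Finset.abs_sum_le_sum_abs _ _).trans ((Finset.sum_le_sum fun m hm ↦
    H.abs_sum_Ico_sawtooth_div_le (Finset.mem_range.1 hm) y).trans ?_)
  rw [Finset.sum_add_distrib, Finset.sum_add_distrib, ← Finset.mul_sum, ← Finset.mul_sum,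
    ← Finset.mul_sum]
  linarith [H.sum_one_div_v_le, H.sum_sum_div_div_le]

end IsConvergents

/-! ### The dual series -/

section Dual

lemma odd_sawtooth_add_mul (x α : ℝ) :
    Function.Odd fun n : ℤ ↦ sawtooth (α + n * x) + sawtooth (-α + n * x) := fun n ↦ by
  have h₁ : α + (-n : ℤ) * x = -(-α + n * x) := by push_cast; ring
  have h₂ : -α + (-n : ℤ) * x = -(α + n * x) := by push_cast; ring
  simp only [h₁, h₂, odd_sawtooth _]
  ring

variable (k : ℕ) [NeZero k] (h j : ℤ)

lemma periodic_sawtooth_add_mul (α : ℝ) :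
    Function.Periodic (fun n : ℤ ↦ sawtooth (α + n * (h / k))) k := fun n ↦ by
  have hk : (k : ℝ) ≠ 0 := NeZero.ne _
  have harg : α + (n + k : ℤ) * (h / k) = α + n * (h / k) + h := by
    push_cast
    field_simp
    ring
  simp only [harg, sawtooth_add_intCast]

lemma tendsto_V1sum_mul :
    Tendsto (fun n : ℕ ↦ V1sum (h / k) (j / k) (n * k)) atTop (nhds (π / k *
      ∑ a ∈ range k, cos (2 * π * a * j / k) * sawtooth (h * a / k) * cot (π * a / k))) := by
  have hk : (k : ℝ) ≠ 0 := NeZero.ne _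
  set F : ℤ → ℝ := fun n ↦ 2 * (cos (2 * π * n * (j / k)) * sawtooth (0 + n * (h / k))) with hF_def
  have hcos : Function.Periodic (fun n : ℤ ↦ cos (2 * π * n * (j / k))) k := fun n ↦ by
    have harg : 2 * π * (n + k : ℤ) * (j / k) = 2 * π * n * (j / k) + j * (2 * π) := by
      push_cast
      field_simp
    simp only [harg, cos_add_int_mul_two_pi]
  have hF : Function.Periodic F k := fun n ↦
    congrArg (2 * ·) ((hcos.mul (periodic_sawtooth_add_mul k h 0)) n)
  have hodd : Function.Odd F := fun n ↦ by
    simp only [hF_def, zero_add, Int.cast_neg, mul_neg, neg_mul, cos_neg, odd_sawtooth _]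
  have hV1sum (n : ℕ) : V1sum (h / k) (j / k) (n * k) = ∑ m ∈ range (n * k), F m / m := by
    have hlast : F (n * k : ℕ) = 0 := by
      have := hF.nat_mul_eq n
      push_cast
      rw [this, hodd.map_zero]
    have hIcc := Finset.sum_range_succ (fun m : ℕ ↦ F m / m) (n * k)
    rw [hlast, zero_div, add_zero, Finset.range_eq_Ico, Finset.sum_eq_sum_Ico_succ_bot (by lia),
      Nat.cast_zero, Nat.cast_zero, div_zero, zero_add] at hIcc
    rw [← hIcc, V1sum, Finset.mul_sum]
    refine Finset.sum_congr rfl fun m _ ↦ ?_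
    simp only [hF_def, zero_add, Int.cast_natCast]
    ring
  simp only [hV1sum]
  convert tendsto_sum_odd_periodic_div hF hodd using 2
  rw [Finset.mul_sum, Finset.mul_sum]
  refine Finset.sum_congr rfl fun a _ ↦ ?_
  simp only [hF_def, zero_add, Int.cast_natCast, mul_div_assoc', mul_comm (a : ℝ) (h : ℝ)]
  field_simp

variable {k h j}

lemma tendsto_sum_sawtooth_add_div_of_tendsto_V1sum (hc : IsCoprime h k) {V : ℝ}
    (hV : Tendsto (V1sum (h / k) (j / k)) atTop (nhds V)) :
    Tendsto (fun n : ℕ ↦ ∑ m ∈ range (n * k),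
      (sawtooth (j / k + m * (h / k)) + sawtooth (-(j / k) + m * (h / k))) / m) atTop (nhds V) := by
  have hlimit := tendsto_nhds_unique (tendsto_V1sum_mul k h j)
    (hV.comp (tendsto_id.atTop_mul_const' (NeZero.pos k)))
  set G : ℤ → ℝ := fun n ↦ sawtooth (j / k + n * (h / k)) + sawtooth (-(j / k) + n * (h / k))
  have hG : Function.Periodic G k :=
    (periodic_sawtooth_add_mul k h (j / k)).add (periodic_sawtooth_add_mul k h (-(j / k)))
  have hodd : Function.Odd G := odd_sawtooth_add_mul (h / k) (j / k)
  have hduality (i : ℤ) : ∑ a ∈ range k, sawtooth (i / k + a * (h / k)) * cot (π * a / k) =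
      ∑ a ∈ range k, cos (2 * π * a * i / k) * sawtooth (h * a / k) * cot (π * a / k) := by
    rw [← sum_sawtooth_add_mul_cot hc]
    exact Finset.sum_congr rfl fun a _ ↦ by ring_nf
  have hneg := hduality (-j)
  simp only [Int.cast_neg, mul_neg, neg_div, cos_neg, ← hduality j] at hneg
  have hsum : π / (2 * k) * ∑ a ∈ range k, G a * cot (π * a / k) = V := by
    simp only [G, Int.cast_natCast, add_mul, Finset.sum_add_distrib, hneg]
    rw [← hlimit, ← hduality]
    ring
  have hdual := tendsto_sum_odd_periodic_div hG hodd
  rw [hsum] at hdual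
  simpa only [G, Int.cast_natCast] using hdual

lemma abs_sum_odd_periodic_div_le {F : ℤ → ℝ} (hF : Function.Periodic F k)
    (hodd : Function.Odd F) {B : ℝ} (hB : ∀ n, |F n| ≤ B) (n : ℕ) :
    |∑ m ∈ range ((n + 1) * k), F m / m| ≤ |∑ m ∈ range k, F m / m| + B := by
  have hk : (0 : ℝ) < k := mod_cast NeZero.pos k
  have hB0 : 0 ≤ B := (abs_nonneg _).trans (hB 0)
  have hblock (N : ℕ) : ‖∑ c ∈ range k, F (N + c : ℕ)‖ ≤ 0 := by
    have hshift := sum_range_comp_mul_add hF isCoprime_one_left N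
    rw [sum_range_eq_zero_of_odd hF hodd] at hshift
    simp only [one_mul, add_comm _ (N : ℤ)] at hshift
    simp [hshift]
  have hshort (N t : ℕ) (ht : t < k) : ‖∑ c ∈ range t, F (N + c : ℕ)‖ ≤ k * B :=
    calc ‖∑ c ∈ range t, F (N + c : ℕ)‖ ≤ t * B := by
          simpa using norm_sum_le_of_le (range t) fun c _ ↦
            (Real.norm_eq_abs _).trans_le (hB (N + c : ℕ))
      _ ≤ k * B := by gcongr
  have htail (t : ℕ) : ‖∑ c ∈ range t, F (k + c : ℕ)‖ ≤ k * B + 0 * t := by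
    simpa using norm_sum_range_le_of_blocks (s := fun m ↦ F m) hblock hshort k t
  have habel := norm_sum_one_div_add_smul_le le_rfl htail hk (n * k)
  simp only [zero_mul, add_zero, mul_div_cancel_left₀ _ hk.ne', Real.norm_eq_abs, smul_eq_mul,
    one_div_mul_eq_div, ← Nat.cast_add] at habel
  rw [show (n + 1) * k = k + n * k by ring, Finset.sum_range_add]
  exact (abs_add_le _ _).trans (by gcongr)

end Dual

lemma IsConvergents.abs_sum_sawtooth_add_div_le {r : ℕ} {b u v : ℕ → ℕ}
    (H : IsConvergents r b u v) (α : ℝ) (n : ℕ) :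
    |∑ m ∈ range ((n + 1) * v r),
      (sawtooth (α + m * (u r / v r)) + sawtooth (-α + m * (u r / v r))) / m| ≤
      ∑ m ∈ range r, log (v (m + 1) / v m) / v m + 117 := by
  have : NeZero (v r) := ⟨(H.v_pos le_rfl).ne'⟩
  set x : ℝ := u r / v r
  have hperiod (y : ℝ) : Function.Periodic (fun n : ℤ ↦ sawtooth (y + n * x)) (v r) :=
    periodic_sawtooth_add_mul (v r) (u r) y
  have hB (n : ℤ) : |sawtooth (α + n * x) + sawtooth (-α + n * x)| ≤ 1 :=
    (abs_add_le _ _).trans (by linarith [abs_sawtooth_le (α + n * x), abs_sawtooth_le (-α + n * x)])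
  have htail := abs_sum_odd_periodic_div_le
    (F := fun n ↦ sawtooth (α + n * x) + sawtooth (-α + n * x))
    ((hperiod α).add (hperiod (-α))) (odd_sawtooth_add_mul x α) hB n
  have hfirst : |∑ m ∈ range (v r), (sawtooth (α + m * x) + sawtooth (-α + m * x)) / m| ≤
      ∑ m ∈ range r, log (v (m + 1) / v m) / v m + 116 := by
    simp only [add_div, Finset.sum_add_distrib]
    refine (abs_add_le _ _).trans ?_
    linarith [H.abs_sum_range_sawtooth_div_le α, H.abs_sum_range_sawtooth_div_le (-α)]
  simp only [Int.cast_natCast] at htail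
  linarith

/-- Bound for `V₁(h/k, α)` in terms of the continued fraction expansion of `h/k`:
`|V₁(h/k, α)| ≤ ∑_{m=0}^{r-1} log(v_{m+1}/v_m)/v_m + C` uniformly in `α ∈ (1/k)ℤ`,
where `v_0, …, v_r` are the denominators of the convergents of `h/k = [0; b_1, …, b_r]`
(with numerators `u_0, …, u_r`). -/
theorem V1_bound_continued_fraction :
    ∃ C : ℝ, 0 < C ∧ ∀ h k : ℕ, 1 ≤ h → h < k → Nat.Coprime h k →
      ∀ (r : ℕ) (b u v : ℕ → ℕ),
        (∀ m, 1 ≤ m → m ≤ r → 1 ≤ b m) → (1 < r → 2 ≤ b r) →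
        v 0 = 1 → u 0 = 0 →
        (1 ≤ r → v 1 = b 1) → (1 ≤ r → u 1 = 1) →
        (∀ m, 2 ≤ m → m ≤ r → v m = b m * v (m - 1) + v (m - 2)) →
        (∀ m, 2 ≤ m → m ≤ r → u m = b m * u (m - 1) + u (m - 2)) →
        v r = k → u r = h →
        ∀ α : ℝ, (∃ j : ℤ, α = (j : ℝ) / k) →
          ∀ V1 : ℝ, Tendsto (V1sum ((h : ℝ) / k) α) atTop (nhds V1) →
            |V1| ≤ (∑ m ∈ Finset.range r,
                Real.log ((v (m + 1) : ℝ) / (v m : ℝ)) / (v m : ℝ)) + C := by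
  refine ⟨117, by norm_num, ?_⟩
  rintro h k - - hcop r b u v hb - hv₀ hu₀ hv₁ hu₁ hv hu rfl rfl _ ⟨j, rfl⟩ V hV
  have H : IsConvergents r b u v :=
    ⟨hb, hu₀, hv₀, hu₁, hv₁, fun m hm ↦ hu (m + 2) (by lia) hm, fun m hm ↦ hv (m + 2) (by lia) hm⟩
  have : NeZero (v r) := ⟨(H.v_pos le_rfl).ne'⟩
  have hdual := tendsto_sum_sawtooth_add_div_of_tendsto_V1sum (h := u r) (j := j) (V := V)
    (Nat.isCoprime_iff_coprime.2 hcop) (by rwa [Int.cast_natCast])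
  simp only [Int.cast_natCast] at hdual
  exact le_of_tendsto (hdual.comp (tendsto_add_atTop_nat 1)).abs
    (Eventually.of_forall (H.abs_sum_sawtooth_add_div_le (j / v r)))
end

section
/- Let k ∈ ℕ, and let h, n ∈ ℤ with gcd(h,k) = 1, and let h̄ be any integer with h·h̄ ≡ 1 (mod k). Then ∑_{m=1}^{k−1} cot(π m h/k) · e^{−2πi n m/k} = −2 i k · ((n h̄/k)). -/
/-!
Put `ζ = exp (-2πih/k)`, a primitive `k`-th root of unity. Then `cot (πmh/k) = i (1 + u) / (1 - u)`
and `exp (-2πinm/k) = u ^ (n h̄)` for `u = ζ ^ m`, so everything rests on the sums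
`T r = ∑ (1 + u) / (1 - u) * u ^ r` over the `k`-th roots of unity `u ≠ 1`. The substitution
`u ↦ u⁻¹` gives `T 0 = 0`, and `(1 + u) / (1 - u) * (1 - u) = 1 + u` reduces `T r - T (r + 1)` to
power sums of roots of unity, whence `T r = 2r - k` for `0 < r < k`.
-/

open Real Filter Finset Complex

lemma sawtooth_intCast_div_natCast (r : ℤ) {k : ℕ} (hk : k ≠ 0) :
    sawtooth (r / k) = if r % k = 0 then 0 else 1 / 2 - ((r % k : ℤ) : ℝ) / k := by
  simp only [sawtooth, Int.fract_div_intCast_eq_div_intCast_mod, div_eq_zero_iff, Nat.cast_eq_zero,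
    hk, or_false, Int.cast_eq_zero]

lemma zpow_eq_zpow_emod₀ {G₀ : Type*} [GroupWithZero G₀] {u : G₀} {k : ℕ}
    (hu : u ^ k = 1) (hk : k ≠ 0) (r : ℤ) : u ^ r = u ^ (r % k) := by
  have hu₀ : u ≠ 0 := by
    rintro rfl
    simp [hk] at hu
  conv_lhs => rw [← Int.emod_add_mul_ediv r k]
  rw [zpow_add₀ hu₀, zpow_mul, zpow_natCast, hu, one_zpow, mul_one]

lemma sum_primitiveRoot_pow_pow_eq_neg_one {R : Type*} [CommRing R] [IsDomain R] {ζ : R} {k r : ℕ}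
    (hζ : IsPrimitiveRoot ζ k) (hk : 0 < k) (hr : ¬k ∣ r) :
    ∑ m ∈ Ico 1 k, (ζ ^ m) ^ r = -1 := by
  have h_full : ∑ m ∈ range k, (ζ ^ r) ^ m = 0 := by
    have h_ne : 1 - ζ ^ r ≠ 0 := sub_ne_zero.2 fun h => hr (hζ.dvd_of_pow_eq_one r h.symm)
    refine (mul_eq_zero.1 ?_).resolve_left h_ne
    rw [mul_neg_geom_sum, pow_right_comm, hζ.pow_eq_one, one_pow, sub_self]
  rw [range_eq_Ico, sum_eq_sum_Ico_succ_bot hk, pow_zero] at h_full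
  simpa only [pow_right_comm ζ _ r] using eq_neg_of_add_eq_zero_right h_full

/-- The Cayley transform `u ↦ (1 + u) / (1 - u)`, which turns `exp (-2iz)` into `-i cot z`. At the
pole `u = 1` division by zero gives it the value `0`. -/
def cayley {K : Type*} [Field K] (u : K) : K := (1 + u) / (1 - u)

section PrimitiveRoot

variable {K : Type*} [Field K] {ζ : K} {k r : ℕ}

lemma cayley_inv {u : K} (hu : u ≠ 0) : cayley u⁻¹ = -cayley u := by
  rw [cayley, cayley, ← mul_div_mul_left _ _ hu, ← div_neg, mul_add, mul_sub, mul_inv_cancel₀ hu]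
  congr 1 <;> ring

lemma cayley_mul_pow_succ {u : K} (hu : u ≠ 1) (r : ℕ) :
    cayley u * u ^ (r + 1) = cayley u * u ^ r - (u ^ r + u ^ (r + 1)) := by
  have h_cancel : cayley u * (1 - u) = 1 + u := div_mul_cancel₀ _ (sub_ne_zero.2 hu.symm)
  linear_combination -u ^ r * h_cancel

lemma sum_cayley_primitiveRoot_pow_eq_zero [NeZero (2 : K)] (hζ : IsPrimitiveRoot ζ k) :
    ∑ m ∈ Ico 1 k, cayley (ζ ^ m) = 0 := by
  have h_odd : ∀ m ∈ Ico 1 k, cayley (ζ ^ (k - m)) = -cayley (ζ ^ m) := by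
    intro m hm
    obtain ⟨hm₁, hmk⟩ := mem_Ico.1 hm
    have hζ₀ : ζ ≠ 0 := hζ.ne_zero (by lia)
    rw [pow_sub₀ ζ hζ₀ hmk.le, hζ.pow_eq_one, one_mul, cayley_inv (pow_ne_zero m hζ₀)]
  have h_reflect : ∑ m ∈ Ico 1 k, cayley (ζ ^ (k - m)) = ∑ m ∈ Ico 1 k, cayley (ζ ^ m) := by
    simpa only [Nat.add_sub_cancel_left, Nat.add_sub_cancel] using
      sum_Ico_reflect (fun m => cayley (ζ ^ m)) 1 k.le_succ
  rw [sum_congr rfl h_odd, sum_neg_distrib, neg_eq_iff_add_eq_zero, ← two_mul] at h_reflect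
  exact (mul_eq_zero.1 h_reflect).resolve_left two_ne_zero

lemma sum_cayley_mul_pow_succ (hζ : IsPrimitiveRoot ζ k) (r : ℕ) :
    ∑ m ∈ Ico 1 k, cayley (ζ ^ m) * (ζ ^ m) ^ (r + 1) =
      ∑ m ∈ Ico 1 k, cayley (ζ ^ m) * (ζ ^ m) ^ r -
        (∑ m ∈ Ico 1 k, (ζ ^ m) ^ r + ∑ m ∈ Ico 1 k, (ζ ^ m) ^ (r + 1)) := by
  rw [← sum_add_distrib, ← sum_sub_distrib]
  refine sum_congr rfl fun m hm => cayley_mul_pow_succ ?_ r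
  obtain ⟨hm₁, hmk⟩ := mem_Ico.1 hm
  exact hζ.pow_ne_one_of_pos_of_lt (by lia) hmk

lemma sum_cayley_mul_pow [NeZero (2 : K)] (hζ : IsPrimitiveRoot ζ k) (hr : 0 < r) (hrk : r < k) :
    ∑ m ∈ Ico 1 k, cayley (ζ ^ m) * (ζ ^ m) ^ r = 2 * r - k := by
  induction r, hr using Nat.le_induction with
  | base =>
    rw [sum_cayley_mul_pow_succ hζ,
      sum_primitiveRoot_pow_pow_eq_neg_one hζ (by lia)
        (Nat.not_dvd_of_pos_of_lt (Nat.succ_pos 0) hrk)]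
    simp only [pow_zero, mul_one, sum_cayley_primitiveRoot_pow_eq_zero hζ, sum_const, Nat.card_Ico,
      nsmul_eq_mul, Nat.cast_pred (zero_lt_one.trans hrk), Nat.cast_one]
    ring
  | succ r hr ih =>
    rw [sum_cayley_mul_pow_succ hζ, ih (by lia),
      sum_primitiveRoot_pow_pow_eq_neg_one hζ (by lia) (Nat.not_dvd_of_pos_of_lt hr (by lia)),
      sum_primitiveRoot_pow_pow_eq_neg_one hζ (by lia) (Nat.not_dvd_of_pos_of_lt r.succ_pos hrk)]
    push_cast
    ring

end PrimitiveRoot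

lemma sum_cayley_mul_zpow_eq_sawtooth {ζ : ℂ} {k : ℕ} (hζ : IsPrimitiveRoot ζ k) (r : ℤ) :
    ∑ m ∈ Ico 1 k, cayley (ζ ^ m) * (ζ ^ m) ^ r = -2 * k * sawtooth (r / k) := by
  rcases eq_or_ne k 0 with rfl | hk
  · simp
  have h_root (m : ℕ) : (ζ ^ m) ^ k = 1 := by rw [pow_right_comm, hζ.pow_eq_one, one_pow]
  obtain ⟨j, hj⟩ := Int.eq_ofNat_of_zero_le (r.emod_nonneg (Nat.cast_ne_zero.2 hk))
  have hjk : j < k := by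
    have := r.emod_lt_of_pos (Nat.cast_pos.2 hk.pos)
    lia
  simp only [zpow_eq_zpow_emod₀ (h_root _) hk r, sawtooth_intCast_div_natCast r hk, hj,
    zpow_natCast, Int.cast_natCast, Nat.cast_eq_zero]
  rcases j.eq_zero_or_pos with rfl | hj₀
  · simp [sum_cayley_primitiveRoot_pow_eq_zero hζ]
  · rw [sum_cayley_mul_pow hζ hj₀ hjk, if_neg hj₀.ne']
    push_cast
    field_simp
    ring

lemma cot_eq_I_mul_cayley_exp (z : ℂ) : Complex.cot z = I * cayley (exp (-(2 * I * z))) := by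
  rw [Complex.cot_eq_exp_ratio, Complex.exp_neg, cayley_inv (Complex.exp_ne_zero _), cayley,
    ← div_div, div_I, add_comm]
  ring

lemma isPrimitiveRoot_exp_neg {k : ℕ} (hk : k ≠ 0) {h : ℤ} (hcop : IsCoprime h k) :
    IsPrimitiveRoot (exp (-(2 * π * I * h / k))) k := by
  convert isPrimitiveRoot_exp_of_isCoprime (-h) k hk hcop.neg_left using 2
  push_cast
  ring

lemma exp_eq_exp_zpow_of_mul_modEq_one {k : ℕ} {h hbar : ℤ} (hinv : h * hbar ≡ 1 [ZMOD k])
    (hk : k ≠ 0) (n : ℤ) (m : ℕ) :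
    exp (-(2 * π * I * n * m / k)) = (exp (-(2 * π * I * h / k)) ^ m) ^ (n * hbar) := by
  obtain ⟨s, hs⟩ := hinv.dvd
  have hs' : (1 : ℂ) - h * hbar = k * s := by exact_mod_cast hs
  rw [← Complex.exp_nat_mul, ← Complex.exp_int_mul, Complex.exp_eq_exp_iff_exists_int]
  refine ⟨-(n * m * s), ?_⟩
  push_cast
  field_simp
  linear_combination (-n * m : ℂ) * hs'

/-- For `gcd(h,k) = 1` and any inverse `h̄` of `h` mod `k`,
`∑_{m=1}^{k-1} cot(π m h/k) e^{-2πinm/k} = -2ik·((n h̄/k))`. -/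
theorem cot_twisted_sum_eq_sawtooth (k : ℕ) (h n hbar : ℤ)
    (hcop : Int.gcd h k = 1) (hinv : (h * hbar) % (k : ℤ) = 1 % (k : ℤ)) :
    ∑ m ∈ Finset.Ico 1 k,
        (Real.cot (π * m * h / k) : ℂ) * Complex.exp (-(2 * π * Complex.I * n * m / k)) =
      -2 * Complex.I * k * (sawtooth ((n : ℝ) * hbar / k) : ℂ) := by
  rcases eq_or_ne k 0 with rfl | hk
  · simp
  set ζ : ℂ := exp (-(2 * π * I * h / k)) with hζ_def
  have hζ : IsPrimitiveRoot ζ k := isPrimitiveRoot_exp_neg hk (Int.isCoprime_iff_gcd_eq_one.2 hcop)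
  have h_cot (m : ℕ) : (Real.cot (π * m * h / k) : ℂ) = I * cayley (ζ ^ m) := by
    rw [Complex.ofReal_cot, cot_eq_I_mul_cayley_exp, hζ_def, ← Complex.exp_nat_mul]
    push_cast
    ring_nf
  calc
    _ = I * ∑ m ∈ Ico 1 k, cayley (ζ ^ m) * (ζ ^ m) ^ (n * hbar) := by
      rw [mul_sum]
      refine sum_congr rfl fun m _ => ?_
      rw [h_cot, exp_eq_exp_zpow_of_mul_modEq_one hinv hk n, mul_assoc]
    _ = -2 * I * k * sawtooth (n * hbar / k) := by
      rw [sum_cayley_mul_zpow_eq_sawtooth hζ]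
      push_cast
      ring
end

section
/- For every x ∈ ℝ \ ℤ, the series ∑_{n=1}^∞ cos(2πnx)/n converges (as a limit of partial sums) and ∑_{n=1}^∞ 2·cos(2πnx)/n = −log(4·sin²(πx)) = −log((1 − e^{−2πix})(1 − e^{2πix})). -/
open Real Filter Finset Complex

/-!
On the closed unit disc minus the point `1`, the Taylor series of `-log (1 - z)` still converges, by
Dirichlet's test applied to the bounded geometric sums `∑ zⁿ` and the weights `1 / n ↓ 0`; Abel's
limit theorem identifies its sum, since `1 - z` stays in the slit plane, where `log` is continuous.
At `z = exp (iθ)` the real part reads `∑ cos (nθ) / n = -log |1 - exp (iθ)| = -log |2 sin (θ / 2)|`.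
-/

open scoped Topology

section DirichletTest

variable {K : Type*} [NormedDivisionRing K] {z : K}

theorem norm_sum_range_pow_le_of_norm_le_one (hz : ‖z‖ ≤ 1) (hz_ne : z ≠ 1) (n : ℕ) :
    ‖∑ i ∈ range n, z ^ i‖ ≤ 2 / ‖z - 1‖ := by
  rw [geom_sum_eq hz_ne, norm_div]
  gcongr
  calc ‖z ^ n - 1‖ ≤ ‖z ^ n‖ + ‖(1 : K)‖ := norm_sub_le _ _
    _ ≤ 1 + 1 := by
      rw [norm_pow, norm_one]
      gcongr
      exact pow_le_one₀ (norm_nonneg z) hz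
    _ = 2 := one_add_one_eq_two

theorem cauchySeq_sum_smul_pow_of_antitone [NormedSpace ℝ K] {a : ℕ → ℝ} (ha : Antitone a)
    (ha_zero : Tendsto a atTop (𝓝 0)) (hz : ‖z‖ ≤ 1) (hz_ne : z ≠ 1) :
    CauchySeq fun M : ℕ ↦ ∑ n ∈ range M, a n • z ^ n :=
  ha.cauchySeq_series_mul_of_tendsto_zero_of_bounded ha_zero
    (norm_sum_range_pow_le_of_norm_le_one hz hz_ne)

end DirichletTest

section LogSeries

variable {z : ℂ}

theorem exists_tendsto_sum_pow_div_of_norm_le_one (hz : ‖z‖ ≤ 1) (hz_ne : z ≠ 1) :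
    ∃ l, Tendsto (fun M : ℕ ↦ ∑ n ∈ range M, z ^ n / n) atTop (𝓝 l) := by
  have weights_antitone : Antitone fun n : ℕ ↦ 1 / ((n : ℝ) + 1) :=
    fun _ _ h ↦ Nat.one_div_le_one_div h
  obtain ⟨l, hl⟩ := cauchySeq_tendsto_of_complete <|
    cauchySeq_sum_smul_pow_of_antitone weights_antitone tendsto_one_div_add_atTop_nhds_zero_nat
      hz hz_ne
  refine ⟨z * l, (tendsto_add_atTop_iff_nat 1).mp ((hl.const_mul z).congr fun M ↦ ?_)⟩
  rw [sum_range_succ', Nat.cast_zero, div_zero, add_zero, mul_sum]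
  refine sum_congr rfl fun n _ ↦ ?_
  rw [real_smul]
  push_cast
  ring

theorem one_sub_mem_slitPlane_of_norm_le_one (hz : ‖z‖ ≤ 1) (hz_ne : z ≠ 1) :
    1 - z ∈ slitPlane := by
  rw [mem_slitPlane_iff]
  contrapose! hz_ne
  obtain ⟨hre, him⟩ := hz_ne
  have re_ge : 1 ≤ z.re := by simpa using hre
  exact Complex.ext (le_antisymm ((re_le_norm z).trans hz) re_ge) (by simpa using him)

theorem tendsto_log_one_sub_ofReal_mul_nhdsLT_one (hz : ‖z‖ ≤ 1) (hz_ne : z ≠ 1) :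
    Tendsto (fun r : ℝ ↦ Complex.log (1 - r * z)) (𝓝[<] 1) (𝓝 (Complex.log (1 - z))) := by
  have continuousAt_one : ContinuousAt (fun r : ℝ ↦ Complex.log (1 - r * z)) 1 :=
    ContinuousAt.clog (by fun_prop) (by simpa using one_sub_mem_slitPlane_of_norm_le_one hz hz_ne)
  simpa using continuousAt_one.tendsto.mono_left nhdsWithin_le_nhds

theorem tendsto_sum_pow_div_neg_log_of_norm_le_one (hz : ‖z‖ ≤ 1) (hz_ne : z ≠ 1) :
    Tendsto (fun M : ℕ ↦ ∑ n ∈ range M, z ^ n / n) atTop (𝓝 (-Complex.log (1 - z))) := by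
  obtain ⟨l, hl⟩ := exists_tendsto_sum_pow_div_of_norm_le_one hz hz_ne
  have abel : Tendsto (fun r : ℝ ↦ ∑' n : ℕ, z ^ n / n * (r : ℂ) ^ n) (𝓝[<] 1) (𝓝 l) :=
    tendsto_map'_iff.mp (tendsto_tsum_powerSeries_nhdsWithin_lt hl)
  have tsum_eq_neg_log : (fun r : ℝ ↦ ∑' n : ℕ, z ^ n / n * (r : ℂ) ^ n) =ᶠ[𝓝[<] 1]
      fun r ↦ -Complex.log (1 - r * z) := by
    filter_upwards [Ioo_mem_nhdsLT (zero_lt_one' ℝ)] with r ⟨r_pos, r_lt_one⟩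
    have norm_lt_one : ‖(r : ℂ) * z‖ < 1 := by
      rw [norm_mul, Complex.norm_of_nonneg r_pos.le]
      exact (mul_le_of_le_one_right r_pos.le hz).trans_lt r_lt_one
    rw [← (hasSum_taylorSeries_neg_log norm_lt_one).tsum_eq]
    exact tsum_congr fun n ↦ by ring
  rwa [tendsto_nhds_unique (abel.congr' tsum_eq_neg_log)
    (tendsto_log_one_sub_ofReal_mul_nhdsLT_one hz hz_ne).neg] at hl

end LogSeries

theorem norm_one_sub_exp_ofReal_mul_I (θ : ℝ) :
    ‖1 - Complex.exp (θ * I)‖ = |2 * Real.sin (θ / 2)| := by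
  rw [norm_sub_rev, mul_comm, norm_exp_I_mul_ofReal_sub_one, Real.norm_eq_abs]

theorem tendsto_sum_cos_div {θ : ℝ} (hθ : Real.sin (θ / 2) ≠ 0) :
    Tendsto (fun M : ℕ ↦ ∑ n ∈ Icc 1 M, Real.cos (n * θ) / n) atTop
      (𝓝 (-Real.log |2 * Real.sin (θ / 2)|)) := by
  have exp_ne_one : Complex.exp (θ * I) ≠ 1 := by
    rw [ne_comm, ← sub_ne_zero, ← norm_ne_zero_iff, norm_one_sub_exp_ofReal_mul_I]
    simpa using hθ
  have log_series := (continuous_re.tendsto _).comp <|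
    tendsto_sum_pow_div_neg_log_of_norm_le_one (norm_exp_ofReal_mul_I θ).le exp_ne_one
  rw [neg_re, log_re, norm_one_sub_exp_ofReal_mul_I] at log_series
  refine ((tendsto_add_atTop_iff_nat 1).mpr log_series).congr fun M ↦ ?_
  rw [Function.comp_apply, sum_range_eq_add_Ico _ M.succ_pos, Nat.cast_zero, div_zero, zero_add,
    re_sum]
  refine sum_congr rfl fun n _ ↦ ?_
  rw [← Complex.exp_nat_mul, ← mul_assoc, div_natCast_re]
  exact_mod_cast congrArg (· / (n : ℝ)) (exp_ofReal_mul_I_re (n * θ))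

theorem four_mul_sin_sq_eq_one_sub_exp_mul_one_sub_exp (z : ℂ) :
    4 * Complex.sin z ^ 2 =
      (1 - Complex.exp (-(2 * z * I))) * (1 - Complex.exp (2 * z * I)) := by
  have exp_mul_exp : Complex.exp (-(2 * z * I)) * Complex.exp (2 * z * I) = 1 := by
    rw [← Complex.exp_add, neg_add_cancel, Complex.exp_zero]
  have two_cos_two_mul :
      2 * Complex.cos (2 * z) = Complex.exp (2 * z * I) + Complex.exp (-(2 * z * I)) := by
    rw [Complex.two_cos, neg_mul]
  calc 4 * Complex.sin z ^ 2 = 2 - 2 * Complex.cos (2 * z) := by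
        rw [Complex.cos_two_mul, Complex.sin_sq]
        ring
    _ = (1 - Complex.exp (-(2 * z * I))) * (1 - Complex.exp (2 * z * I)) := by
        linear_combination -two_cos_two_mul - exp_mul_exp

theorem sin_pi_mul_eq_zero_iff_fract_eq_zero {x : ℝ} :
    Real.sin (π * x) = 0 ↔ Int.fract x = 0 := by
  simp [Real.sin_eq_zero_iff, Int.fract_eq_zero_iff, mul_comm π, pi_ne_zero]

/-- For `x ∈ ℝ \ ℤ`, the series `∑_{n≥1} 2·cos(2πnx)/n` converges to
`-log(4 sin²(πx))`, which equals `-log((1 - e^{-2πix})(1 - e^{2πix}))`. -/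
theorem sum_two_cos_div_eq_neg_log_four_sin_sq (x : ℝ) (hx : Int.fract x ≠ 0) :
    Tendsto (fun M : ℕ => ∑ n ∈ Finset.Icc 1 M, 2 * Real.cos (2 * π * n * x) / n)
        atTop (nhds (-Real.log (4 * Real.sin (π * x) ^ 2))) ∧
      ((4 * Real.sin (π * x) ^ 2 : ℝ) : ℂ) =
        (1 - Complex.exp (-(2 * π * Complex.I * x))) * (1 - Complex.exp (2 * π * Complex.I * x)) := by
  have half_angle : 2 * π * x / 2 = π * x := by ring
  constructor
  · have sin_ne_zero : Real.sin (2 * π * x / 2) ≠ 0 := by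
      rwa [half_angle, Ne, sin_pi_mul_eq_zero_iff_fract_eq_zero]
    have log_eq : -Real.log (4 * Real.sin (π * x) ^ 2) =
        2 * -Real.log |2 * Real.sin (2 * π * x / 2)| := by
      rw [half_angle, Real.log_abs, show 4 * Real.sin (π * x) ^ 2 = (2 * Real.sin (π * x)) ^ 2 by
        ring, Real.log_pow, Nat.cast_ofNat, mul_neg]
    rw [log_eq]
    refine ((tendsto_sum_cos_div sin_ne_zero).const_mul 2).congr fun M ↦ ?_
    rw [mul_sum]
    refine sum_congr rfl fun n _ ↦ ?_
    rw [← mul_div_assoc, show (n : ℝ) * (2 * π * x) = 2 * π * n * x by ring]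
  · have angle : 2 * π * I * x = 2 * (π * x : ℂ) * I := by ring
    push_cast
    rw [angle, four_mul_sin_sq_eq_one_sub_exp_mul_one_sub_exp]
end

section
/- For every x ∈ ℝ, the series ∑_{n=1}^∞ sin(2πnx)/(πn) converges (as a limit of partial sums) and ∑_{n=1}^∞ sin(2πnx)/(πn) = ((x)). -/
open Real Filter Finset

/-!
For `0 < θ < 2π` the sum `∑ sin (n θ) / n` is the imaginary part of the Taylor series of
`-log (1 - z)` at the boundary point `z = exp (i θ)` of its disc of convergence. Dirichlet's test
shows that the series converges there, Abel's limit theorem identifies its sum as `-log (1 - z)`,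
and the factorization `1 - exp (i θ) = 2 sin (θ / 2) exp (i (θ - π) / 2)` shows that
`arg (1 - z) = (θ - π) / 2`.
-/

open scoped Topology

section DirichletTest

variable {K : Type*} [NormedDivisionRing K] {z : K}

theorem norm_geom_sum_le_two_div (hz : ‖z‖ ≤ 1) (hz1 : z ≠ 1) (n : ℕ) :
    ‖∑ i ∈ range n, z ^ i‖ ≤ 2 / ‖z - 1‖ := by
  rw [geom_sum_eq hz1, norm_div]
  gcongr
  calc ‖z ^ n - 1‖ ≤ ‖z ^ n‖ + ‖(1 : K)‖ := norm_sub_le _ _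
    _ ≤ 1 + 1 := by
      rw [norm_pow, norm_one]
      gcongr
      exact pow_le_one₀ (norm_nonneg z) hz
    _ = 2 := one_add_one_eq_two

theorem cauchySeq_sum_smul_pow [NormedSpace ℝ K] {a : ℕ → ℝ} (ha : Antitone a)
    (ha0 : Tendsto a atTop (𝓝 0)) (hz : ‖z‖ ≤ 1) (hz1 : z ≠ 1) :
    CauchySeq fun N ↦ ∑ n ∈ range N, a n • z ^ n :=
  ha.cauchySeq_series_mul_of_tendsto_zero_of_bounded ha0 (norm_geom_sum_le_two_div hz hz1)

end DirichletTest

section LogSeries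

variable {z : ℂ}

theorem one_sub_mem_slitPlane (hz : ‖z‖ ≤ 1) (hz1 : z ≠ 1) : 1 - z ∈ Complex.slitPlane := by
  refine Complex.mem_slitPlane_iff.2 (Or.inl ?_)
  rw [Complex.sub_re, Complex.one_re, sub_pos]
  refine ((Complex.re_le_norm z).trans hz).lt_of_ne fun hre ↦ hz1 ?_
  have hnorm : z.re = ‖z‖ := (Complex.re_le_norm z).antisymm (hre ▸ hz)
  rw [Complex.eq_coe_norm_of_nonneg (Complex.re_eq_norm.1 hnorm), ← hnorm, hre,
    Complex.ofReal_one]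

-- The term `n = 0` is `1 / 0 = 0`, so this is the series `∑_{n ≥ 1} z ^ n / n`.
theorem exists_tendsto_sum_pow_div (hz : ‖z‖ ≤ 1) (hz1 : z ≠ 1) :
    ∃ l, Tendsto (fun N ↦ ∑ n ∈ range N, z ^ n / (n : ℂ)) atTop (𝓝 l) := by
  obtain ⟨l, hl⟩ := cauchySeq_tendsto_of_complete <| cauchySeq_sum_smul_pow
    (fun _ _ h ↦ Nat.one_div_le_one_div (α := ℝ) h) tendsto_one_div_add_atTop_nhds_zero_nat hz hz1
  refine ⟨z * l, (tendsto_add_atTop_iff_nat 1).1 ((hl.const_mul z).congr fun N ↦ ?_)⟩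
  rw [sum_range_succ', Nat.cast_zero, div_zero, add_zero, mul_sum]
  refine sum_congr rfl fun n _ ↦ ?_
  rw [Complex.real_smul]
  push_cast
  ring

theorem eq_neg_log_one_sub_of_tendsto {l : ℂ} (hz : ‖z‖ ≤ 1) (hz1 : z ≠ 1)
    (hl : Tendsto (fun N ↦ ∑ n ∈ range N, z ^ n / (n : ℂ)) atTop (𝓝 l)) :
    l = -Complex.log (1 - z) := by
  have abel : Tendsto (fun r : ℝ ↦ ∑' n : ℕ, z ^ n / (n : ℂ) * (r : ℂ) ^ n) (𝓝[<] 1) (𝓝 l) :=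
    tendsto_map'_iff.1 (Complex.tendsto_tsum_powerSeries_nhdsWithin_lt hl)
  have taylor : ∀ r ∈ Set.Ioo (0 : ℝ) 1,
      ∑' n : ℕ, z ^ n / (n : ℂ) * (r : ℂ) ^ n = -Complex.log (1 - r * z) := by
    intro r hr
    have hrz : ‖(r : ℂ) * z‖ < 1 := by
      rw [norm_mul, Complex.norm_of_nonneg hr.1.le]
      exact mul_lt_one_of_nonneg_of_lt_one_left hr.1.le hr.2 hz
    rw [← (Complex.hasSum_taylorSeries_neg_log hrz).tsum_eq]
    exact tsum_congr fun n ↦ by ring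
  have hcont : ContinuousAt (fun r : ℝ ↦ -Complex.log (1 - r * z)) 1 :=
    (ContinuousAt.clog (by fun_prop) (by simpa using one_sub_mem_slitPlane hz hz1)).neg
  have hlog : Tendsto (fun r : ℝ ↦ -Complex.log (1 - r * z)) (𝓝[<] 1)
      (𝓝 (-Complex.log (1 - z))) := by
    simpa using hcont.tendsto.mono_left nhdsWithin_le_nhds
  refine tendsto_nhds_unique abel (hlog.congr' ?_)
  filter_upwards [Ioo_mem_nhdsLT (zero_lt_one' ℝ)] with r hr using (taylor r hr).symm

theorem tendsto_sum_pow_div_neg_log (hz : ‖z‖ ≤ 1) (hz1 : z ≠ 1) :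
    Tendsto (fun N ↦ ∑ n ∈ range N, z ^ n / (n : ℂ)) atTop (𝓝 (-Complex.log (1 - z))) := by
  obtain ⟨l, hl⟩ := exists_tendsto_sum_pow_div hz hz1
  exact eq_neg_log_one_sub_of_tendsto hz hz1 hl ▸ hl

end LogSeries

section SineSeries

theorem one_sub_exp_mul_I (θ : ℂ) :
    1 - Complex.exp (θ * Complex.I) =
      2 * Complex.sin (θ / 2) * Complex.exp ((θ - π) / 2 * Complex.I) := by
  have hrot : Complex.exp ((θ - π) / 2 * Complex.I) =
      Complex.exp (θ / 2 * Complex.I) * -Complex.I := by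
    rw [← Complex.exp_neg_pi_div_two_mul_I, ← Complex.exp_add]
    ring_nf
  calc 1 - Complex.exp (θ * Complex.I)
      = (Complex.exp (-(θ / 2) * Complex.I) - Complex.exp (θ / 2 * Complex.I)) *
          Complex.exp (θ / 2 * Complex.I) := by
        rw [sub_mul, ← Complex.exp_add, ← Complex.exp_add, neg_mul, neg_add_cancel,
          Complex.exp_zero, ← add_mul, add_halves]
    _ = (Complex.exp (-(θ / 2) * Complex.I) - Complex.exp (θ / 2 * Complex.I)) * Complex.I *
          (Complex.exp (θ / 2 * Complex.I) * -Complex.I) := by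
        rw [mul_mul_mul_comm, mul_neg, Complex.I_mul_I, neg_neg, mul_one]
    _ = 2 * Complex.sin (θ / 2) * Complex.exp ((θ - π) / 2 * Complex.I) := by
        rw [Complex.two_sin, hrot]

variable {θ : ℝ}

theorem sin_half_pos (hθ : θ ∈ Set.Ioo 0 (2 * π)) : 0 < sin (θ / 2) :=
  sin_pos_of_pos_of_lt_pi (by linarith [hθ.1]) (by linarith [hθ.2])

theorem exp_mul_I_ne_one (hθ : θ ∈ Set.Ioo 0 (2 * π)) : Complex.exp (θ * Complex.I) ≠ 1 := by
  rw [ne_comm, ← sub_ne_zero, one_sub_exp_mul_I]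
  have hsin : Complex.sin (θ / 2) ≠ 0 := by exact_mod_cast (sin_half_pos hθ).ne'
  exact mul_ne_zero (mul_ne_zero two_ne_zero hsin) (Complex.exp_ne_zero _)

theorem arg_one_sub_exp_mul_I (hθ : θ ∈ Set.Ioo 0 (2 * π)) :
    (1 - Complex.exp (θ * Complex.I)).arg = (θ - π) / 2 := by
  have hpolar : 1 - Complex.exp (θ * Complex.I) =
      (2 * sin (θ / 2) : ℝ) * Complex.exp (((θ - π) / 2 : ℝ) * Complex.I) := by
    push_cast
    exact one_sub_exp_mul_I θ
  rw [hpolar, Complex.arg_real_mul _ (mul_pos two_pos (sin_half_pos hθ)), Complex.arg_exp_mul_I,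
    toIocMod_eq_self]
  constructor <;> linarith [hθ.1, hθ.2]

theorem exp_mul_I_pow_div_im (θ : ℝ) (n : ℕ) :
    (Complex.exp (θ * Complex.I) ^ n / (n : ℂ)).im = sin (n * θ) / n := by
  rw [Complex.div_natCast_im, ← Complex.exp_nat_mul, ← mul_assoc, ← Complex.ofReal_natCast,
    ← Complex.ofReal_mul, Complex.exp_ofReal_mul_I_im]

theorem tendsto_sum_sin_nat_mul_div (hθ : θ ∈ Set.Ioo 0 (2 * π)) :
    Tendsto (fun N ↦ ∑ n ∈ range N, sin (n * θ) / n) atTop (𝓝 ((π - θ) / 2)) := by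
  have hlog := tendsto_sum_pow_div_neg_log (Complex.norm_exp_ofReal_mul_I θ).le
    (exp_mul_I_ne_one hθ)
  have him := (Complex.continuous_im.tendsto _).comp hlog
  rw [Complex.neg_im, Complex.log_im, arg_one_sub_exp_mul_I hθ, ← neg_div, neg_sub] at him
  simpa only [Function.comp_def, Complex.im_sum, exp_mul_I_pow_div_im] using him

end SineSeries

theorem sin_two_pi_mul_nat_mul_fract (n : ℕ) (x : ℝ) :
    sin (2 * π * n * x) = sin (n * (2 * π * Int.fract x)) := by
  have hshift : 2 * π * n * x = n * (2 * π * Int.fract x) + (n * ⌊x⌋ : ℤ) * (2 * π) := by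
    rw [Int.fract]
    push_cast
    ring
  rw [hshift, sin_add_int_mul_two_pi]

/-- For every `x ∈ ℝ`, the series `∑_{n≥1} sin(2πnx)/(πn)` converges to `((x))`. -/
theorem sum_sin_div_eq_sawtooth (x : ℝ) :
    Tendsto (fun M : ℕ => ∑ n ∈ Finset.Icc 1 M, Real.sin (2 * π * n * x) / (π * n))
      atTop (nhds (sawtooth x)) := by
  simp_rw [sin_two_pi_mul_nat_mul_fract]
  rcases (Int.fract_nonneg x).eq_or_lt' with hx | hx
  · simp [sawtooth, hx]
  have hθ : 2 * π * Int.fract x ∈ Set.Ioo 0 (2 * π) :=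
    ⟨mul_pos two_pi_pos hx, mul_lt_of_lt_one_right two_pi_pos (Int.fract_lt_one x)⟩
  have hlim : (π - 2 * π * Int.fract x) / 2 / π = sawtooth x := by
    rw [sawtooth, if_neg hx.ne']
    field_simp
  rw [← hlim]
  refine (((tendsto_add_atTop_iff_nat 1).2 (tendsto_sum_sin_nat_mul_div hθ)).div_const π).congr
    fun M ↦ ?_
  rw [sum_range_eq_add_Ico _ (Nat.add_one_pos M), Ico_add_one_right_eq_Icc, Nat.cast_zero, div_zero,
    zero_add, sum_div]
  exact sum_congr rfl fun n _ ↦ by rw [div_div, mul_comm π]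
end

section
/- The function g : ℝ → ℝ defined by g(x) := π·cot(πx) − 1/{x} + 1/{−x} for x ∉ ℤ and g(x) := 0 for x ∈ ℤ is odd, 1-periodic, and bounded on ℝ. -/
open Real

/-! By the duplication formula `2 cot 2u = cot u - tan u = cot u - cot (π / 2 - u)`, on `(0, 1)` the
function is `π / 2` times the difference of the values of `u⁻¹ - cot u` at `u = π (1 - x) / 2` and
at `u = π x / 2`. Both points lie in `(0, π / 2)`, where `u⁻¹ - cot u` takes values in `[0, 1]`. -/

lemma cot_neg (x : ℝ) : cot (-x) = -cot x := by
  rw [← tan_inv_eq_cot, tan_neg, inv_neg, tan_inv_eq_cot]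

lemma cot_periodic : Function.Periodic cot π := fun x ↦ by
  rw [← tan_inv_eq_cot, tan_add_pi, tan_inv_eq_cot]

lemma cot_pi_div_two_sub (x : ℝ) : cot (π / 2 - x) = tan x := by
  rw [← tan_inv_eq_cot, tan_pi_div_two_sub, inv_inv]

lemma two_mul_cot_two_mul (x : ℝ) : 2 * cot (2 * x) = cot x - tan x := by
  rw [← tan_inv_eq_cot, ← tan_inv_eq_cot, tan_two_mul]
  by_cases h : tan x = 0
  · simp [h]
  · field_simp

lemma cot_le_inv {x : ℝ} (h₀ : 0 < x) (h₁ : x < π / 2) : cot x ≤ x⁻¹ := by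
  rw [← tan_inv_eq_cot]
  exact inv_anti₀ h₀ (le_tan h₀.le h₁)

lemma one_le_sin_add_cos {x : ℝ} (h₀ : 0 ≤ x) (h₁ : x ≤ π / 2) : 1 ≤ sin x + cos x := by
  have hsin : 0 ≤ sin x := sin_nonneg_of_nonneg_of_le_pi h₀ (by linarith [pi_pos])
  have hcos : 0 ≤ cos x := cos_nonneg_of_neg_pi_div_two_le_of_le (by linarith) h₁
  calc 1 = sin x ^ 2 + cos x ^ 2 := (sin_sq_add_cos_sq x).symm
    _ ≤ sin x + cos x :=
      add_le_add (pow_le_of_le_one hsin (sin_le_one x) two_ne_zero)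
        (pow_le_of_le_one hcos (cos_le_one x) two_ne_zero)

lemma inv_sub_cot_le_one {x : ℝ} (h₀ : 0 < x) (h₁ : x ≤ π / 2) : x⁻¹ - cot x ≤ 1 := by
  have hsin : 0 < sin x := sin_pos_of_pos_of_lt_pi h₀ (by linarith [pi_pos])
  calc x⁻¹ - cot x ≤ (sin x)⁻¹ - cos x / sin x := by
        rw [cot_eq_cos_div_sin]
        exact sub_le_sub_right (inv_anti₀ hsin (sin_le h₀.le)) _
    _ = (1 - cos x) / sin x := by rw [sub_div, one_div]
    _ ≤ 1 := (div_le_one hsin).2 (by linarith [one_le_sin_add_cos h₀.le h₁])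

lemma inv_sub_cot_mem_Icc {x : ℝ} (hx : x ∈ Set.Ioo 0 (π / 2)) : x⁻¹ - cot x ∈ Set.Icc 0 1 :=
  ⟨sub_nonneg.2 (cot_le_inv hx.1 hx.2), inv_sub_cot_le_one hx.1 hx.2.le⟩

/-- The function `x ↦ π cot (π x) - 1 / {x} + 1 / {-x}`. No case distinction is needed at the
integers: there `cot (π x)`, `1 / {x}` and `1 / {-x}` are all divisions by zero, so each is `0`. -/
noncomputable def cotSubFractInv (x : ℝ) : ℝ :=
  π * cot (π * x) - 1 / Int.fract x + 1 / Int.fract (-x)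

namespace cotSubFractInv

lemma odd : Function.Odd cotSubFractInv := fun x ↦ by
  rw [cotSubFractInv, cotSubFractInv, mul_neg, cot_neg, neg_neg]
  ring

lemma periodic : Function.Periodic cotSubFractInv 1 := fun x ↦ by
  rw [cotSubFractInv, cotSubFractInv, mul_add, mul_one, cot_periodic, Int.fract_add_one, neg_add,
    ← sub_eq_add_neg, Int.fract_sub_one]

lemma eq_zero_of_fract_eq_zero {x : ℝ} (hx : Int.fract x = 0) : cotSubFractInv x = 0 := by
  obtain ⟨n, rfl⟩ := Int.fract_eq_zero_iff.1 hx
  have hcot : cot (π * n) = 0 := by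
    rw [cot_eq_cos_div_sin, mul_comm, sin_int_mul_pi, div_zero]
  rw [cotSubFractInv, hcot, hx, Int.fract_neg_eq_zero.2 hx, mul_zero, div_zero, sub_zero, add_zero]

lemma eq_of_mem_Ioo {x : ℝ} (hx : x ∈ Set.Ioo 0 1) :
    cotSubFractInv x = π / 2 *
      (((π / 2 - π * x / 2)⁻¹ - cot (π / 2 - π * x / 2)) -
        ((π * x / 2)⁻¹ - cot (π * x / 2))) := by
  have hfract : Int.fract x = x := Int.fract_eq_self.2 ⟨hx.1.le, hx.2⟩
  have hfract_neg : Int.fract (-x) = 1 - x := by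
    rw [Int.fract_neg (hfract.trans_ne hx.1.ne'), hfract]
  have hcot : 2 * cot (π * x) = cot (π * x / 2) - tan (π * x / 2) := by
    rw [← two_mul_cot_two_mul, mul_div_cancel₀ _ two_ne_zero]
  have hinv : π / 2 * (π * x / 2)⁻¹ = 1 / x := by
    field_simp
  have hinv_sub : π / 2 * (π / 2 - π * x / 2)⁻¹ = 1 / (1 - x) := by
    rw [show π / 2 - π * x / 2 = π / 2 * (1 - x) by ring]
    field_simp
  rw [cotSubFractInv, hfract, hfract_neg, cot_pi_div_two_sub]
  linear_combination π / 2 * hcot + hinv - hinv_sub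

lemma abs_le_pi_div_two_of_mem_Ioo {x : ℝ} (hx : x ∈ Set.Ioo 0 1) :
    |cotSubFractInv x| ≤ π / 2 := by
  have hu : π * x / 2 ∈ Set.Ioo 0 (π / 2) :=
    ⟨half_pos (mul_pos pi_pos hx.1),
      div_lt_div_of_pos_right (mul_lt_of_lt_one_right pi_pos hx.2) two_pos⟩
  have hv : π / 2 - π * x / 2 ∈ Set.Ioo 0 (π / 2) :=
    ⟨sub_pos.2 hu.2, sub_lt_self _ hu.1⟩
  rw [eq_of_mem_Ioo hx, abs_mul, abs_of_pos pi_div_two_pos]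
  refine mul_le_of_le_one_right pi_div_two_pos.le ?_
  exact dist_le_of_mem_Icc_01 (inv_sub_cot_mem_Icc hv) (inv_sub_cot_mem_Icc hu)

lemma abs_le_pi_div_two (x : ℝ) : |cotSubFractInv x| ≤ π / 2 := by
  obtain ⟨y, ⟨h₀, h₁⟩, hxy⟩ := periodic.exists_mem_Ico₀ one_pos x
  rw [hxy]
  rcases h₀.eq_or_lt with rfl | h₀
  · rw [eq_zero_of_fract_eq_zero Int.fract_zero, abs_zero]
    exact pi_div_two_pos.le
  · exact abs_le_pi_div_two_of_mem_Ioo ⟨h₀, h₁⟩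

end cotSubFractInv

/-- The function `g(x) = π cot(πx) - 1/{x} + 1/{-x}` (extended by `0` on `ℤ`)
is odd, `1`-periodic and bounded. -/
theorem cot_minus_fract_inv_odd_periodic_bounded (g : ℝ → ℝ)
    (hg : ∀ x : ℝ, g x =
      if Int.fract x = 0 then 0
      else π * Real.cot (π * x) - 1 / Int.fract x + 1 / Int.fract (-x)) :
    (∀ x : ℝ, g (-x) = -g x) ∧ (∀ x : ℝ, g (x + 1) = g x) ∧ ∃ M : ℝ, ∀ x : ℝ, |g x| ≤ M := by
  obtain rfl : g = cotSubFractInv := funext fun x ↦ by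
    rw [hg]
    split_ifs with hx
    · exact (cotSubFractInv.eq_zero_of_fract_eq_zero hx).symm
    · rfl
  exact ⟨cotSubFractInv.odd, cotSubFractInv.periodic, π / 2, cotSubFractInv.abs_le_pi_div_two⟩
end
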